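/- arXiv:1610.01916 — 2 statements merged into one kernel-verified Lean document; each statement's English description precedes it below -/
import Mathlib

section
/- Stability of P-asymptotic expansions under blow-down (Proposition 6.1): Let d ≥ 2, P holomorphic on D(0;ρ_0) ⊆ ℂ^d with P(0) = 0 and P not identically zero, Π = Π_P(α,β;ρ_0), and f : Π → ℂ holomorphic. Assume that for every ξ ∈ ℂ ∪ {∞} there exist r_ξ > 0 with b_ξ(D(0;r_ξ)) ⊆ D(0;ρ_0), a sequence (g_n^ξ) of bounded holomorphic functions on D(0;r_ξ), and constants C_n^ξ > 0 such that |f(b_ξ(v)) − g_n^ξ(v)| ≤ C_n^ξ·|P(b_ξ(v))|^n for every n ∈ ℕ and every v in the (P∘b_ξ)-sector Π_{P∘b_ξ}(α,β;r_ξ) with b_ξ(v) ∈ Π. Then there exist ρ > 0, a sequence (f_n) of bounded holomorphic functions on D(0;ρ), and constants B_n > 0 such that |f(x) − f_n(x)| ≤ B_n·|P(x)|^n for every n ∈ ℕ and every x ∈ Π_P(α,β;ρ); that is, f admits a P-asymptotic expansion in the estimate sense. -/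
open Set Complex

noncomputable section

/-- Open polydisk of radius `r` centered at `0` in `ℂ^d`. -/
def polydisk (d : ℕ) (r : ℝ) : Set (Fin d → ℂ) :=
  {x | ∀ j, ‖x j‖ < r}

/-- The `P`-sector `Π_P(a,b;r)`. -/
def PSector (d : ℕ) (P : (Fin d → ℂ) → ℂ) (a b r : ℝ) : Set (Fin d → ℂ) :=
  {x | (∀ j, 0 < ‖x j‖ ∧ ‖x j‖ < r) ∧ P x ≠ 0 ∧
    ∃ θ ∈ Set.Ioo a b, P x = (‖P x‖ : ℂ) * Complex.exp (θ * Complex.I)}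

/-- Blow-up chart at `ξ ∈ ℂ`: `b_ξ(v) = (v₂, (ξ+v₁)·v₂, v₃, …)` (in dimension `d+2`). -/
def blowUpC (d : ℕ) (ξ : ℂ) (v : Fin (d + 2) → ℂ) : Fin (d + 2) → ℂ :=
  fun i => if i = 0 then v 1 else if i = 1 then (ξ + v 0) * v 1 else v i

/-- Blow-up chart at `∞`: `b_∞(v) = (v₁·v₂, v₂, v₃, …)` (in dimension `d+2`). -/
def blowUpInf (d : ℕ) (v : Fin (d + 2) → ℂ) : Fin (d + 2) → ℂ :=
  fun i => if i = 0 then v 0 * v 1 else v i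

lemma interval_ind {p : ℝ → ℝ → Prop} {a b : ℝ} (hab : a ≤ b)
    (merge : ∀ x y z, a ≤ x → x ≤ y → y ≤ z → z ≤ b → p x y → p y z → p x z)
    (loc : ∀ x ∈ Icc a b, ∃ ε > 0, ∀ u v, a ≤ u → v ≤ b → x - ε < u → u ≤ v → v < x + ε → p u v) :
    p a b := by
  set S : Set ℝ := {y | y ∈ Icc a b ∧ p a y} with hS
  have haS : a ∈ S := by
    obtain ⟨ε, hε, h⟩ := loc a ⟨le_rfl, hab⟩
    exact ⟨⟨le_rfl, hab⟩, h a a le_rfl hab (by linarith) le_rfl (by linarith)⟩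
  have hbdd : BddAbove S := ⟨b, fun y hy => hy.1.2⟩
  set t := sSup S with ht
  have hat : a ≤ t := le_csSup hbdd haS
  have htb : t ≤ b := csSup_le ⟨a, haS⟩ fun y hy => hy.1.2
  obtain ⟨ε, hε, h⟩ := loc t ⟨hat, htb⟩
  obtain ⟨y, hyS, hy⟩ := exists_lt_of_lt_csSup ⟨a, haS⟩ (show t - ε < sSup S by linarith)
  have hyt : y ≤ t := le_csSup hbdd hyS
  have key : min (t + ε / 2) b ∈ S := by
    have h1 : y ≤ min (t + ε / 2) b := le_min (by linarith) hyS.1.2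
    refine ⟨⟨hyS.1.1.trans h1, min_le_right _ _⟩, ?_⟩
    refine merge a y _ le_rfl hyS.1.1 h1 (min_le_right _ _) hyS.2 ?_
    exact h _ _ hyS.1.1 (min_le_right _ _) hy h1
      (lt_of_le_of_lt (min_le_left _ _) (by linarith))
  have h2 : min (t + ε / 2) b ≤ t := le_csSup hbdd key
  have h3 : min (t + ε / 2) b = b := by
    rcases min_choice (t + ε / 2) b with h' | h'
    · rw [h'] at h2; linarith
    · exact h'
  rw [h3] at key
  exact key.2


lemma changeOrigin_bound {E F : Type*} [NormedAddCommGroup E] [NormedSpace ℂ E]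
    [NormedAddCommGroup F] [NormedSpace ℂ F]
    (P : FormalMultilinearSeries ℂ E F) (r1 : NNReal)
    (hrad : (r1 + r1 : ENNReal) < P.radius) :
    ∃ M : ℕ → NNReal, Summable (fun k => M k * r1 ^ k) ∧
      ∀ y : E, ‖y‖₊ < r1 → ∀ k, ‖P.changeOrigin y k‖ ≤ M k := by
  have hr1P : (r1 : ENNReal) < P.radius := lt_of_le_of_lt (by simp) hrad
  refine ⟨fun k => ∑' s : Σ l : ℕ, { s : Finset (Fin (k + l)) // s.card = l },
    ‖P (k + s.1)‖₊ * r1 ^ s.1, ?_, ?_⟩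
  · simpa only [← NNReal.tsum_mul_right] using
      (NNReal.summable_sigma.1 (P.changeOriginSeries_summable_aux₁ hrad)).2
  · intro y hy k
    have hlt : (‖y‖₊ : ENNReal) < P.radius := lt_trans (by exact_mod_cast hy) hr1P
    have h2 := P.nnnorm_changeOrigin_le k hlt
    have h3 : ‖P.changeOrigin y k‖₊ ≤ ∑' s : Σ l : ℕ, { s : Finset (Fin (k + l)) // s.card = l },
        ‖P (k + s.1)‖₊ * r1 ^ s.1 := by
      refine h2.trans ?_
      refine Summable.tsum_le_tsum (fun i => ?_) (P.changeOriginSeries_summable_aux₂ hlt k)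
        (P.changeOriginSeries_summable_aux₂ hr1P k)
      gcongr
    exact_mod_cast h3

open MeasureTheory in
lemma pa_series {E : Type*} [NormedAddCommGroup E] [NormedSpace ℂ E]
    (k : ℝ → E → ℂ) (c : ℝ → ℂ) (hc : Continuous c) (p : E) (u v : ℝ) (huv : u ≤ v)
    (q : ℝ → FormalMultilinearSeries ℂ E ℂ) (M : ℕ → NNReal) (r1 : NNReal) (hr1 : 0 < r1)
    (hMs : Summable (fun k => M k * r1 ^ k))
    (hqM : ∀ s ∈ Icc u v, ∀ k, ‖q s k‖ ≤ M k)
    (hqc : ∀ k, ContinuousOn (fun s => q s k) (Icc u v))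
    (hsum : ∀ s ∈ Icc u v, ∀ z ∈ Metric.eball (0 : E) r1,
      HasSum (fun k => q s k (fun _ => z)) (k s (p + z))) :
    AnalyticAt ℂ (fun x => ∫ s in u..v, c s * k s x) p := by
  obtain ⟨C, hC⟩ := isCompact_Icc.exists_bound_of_continuousOn (s := Icc u v) hc.continuousOn
  have hC0 : 0 ≤ C := (norm_nonneg _).trans (hC u ⟨le_rfl, huv⟩)
  have hI : uIoc u v ⊆ Icc u v := by rw [uIoc_of_le huv]; exact Ioc_subset_Icc_self
  have hcont : ∀ k, ContinuousOn (fun s => c s • q s k) (Icc u v) := fun k =>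
    hc.continuousOn.smul (hqc k)
  have hMs' : Summable (fun k => (M k : ℝ) * (r1 : ℝ) ^ k) := by exact_mod_cast hMs
  refine ⟨fun k => ∫ s in u..v, c s • q s k, r1, ?_, by exact_mod_cast hr1, ?_⟩
  · apply FormalMultilinearSeries.le_radius_of_summable_norm
    refine Summable.of_nonneg_of_le (fun _ => by positivity) (fun k => ?_)
      (hMs'.mul_left (C * |v - u|))
    have : ‖∫ s in u..v, c s • q s k‖ ≤ (C * M k) * |v - u| :=
      intervalIntegral.norm_integral_le_of_norm_le_const fun s hs => by
        rw [norm_smul]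
        exact mul_le_mul (hC s (hI hs)) (hqM s (hI hs) k) (norm_nonneg _) hC0
    calc _ ≤ ((C * M k) * |v - u|) * (r1 : ℝ) ^ k := by gcongr
      _ = _ := by ring
  · intro z hz
    have h1 : ∀ k, (∫ s in u..v, c s • q s k) (fun _ => z) =
        ∫ s in u..v, c s * q s k (fun _ => z) := fun k => by
      have hint : IntervalIntegrable (fun s => c s • q s k) volume u v :=
        ContinuousOn.intervalIntegrable (by rw [uIcc_of_le huv]; exact hcont k)
      exact ((ContinuousMultilinearMap.apply ℂ (fun _ : Fin k => E) ℂ (fun _ => z)).intervalIntegral_comp_comm hint).symm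
    simp only [h1]
    refine intervalIntegral.hasSum_integral_of_dominated_convergence
      (fun k _ => C * ((M k : ℝ) * (r1 : ℝ) ^ k)) ?_ ?_ ?_ ?_ ?_
    · intro k
      rw [uIoc_of_le huv]
      have : ContinuousOn (fun s => c s * q s k (fun _ => z)) (Icc u v) :=
        (ContinuousMultilinearMap.apply ℂ (fun _ : Fin k => E) ℂ (fun _ => z)).continuous.comp_continuousOn (hcont k)
      exact (this.mono Ioc_subset_Icc_self).aestronglyMeasurable measurableSet_Ioc
    · intro k
      refine Filter.Eventually.of_forall fun s hs => ?_
      rw [norm_mul]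
      refine mul_le_mul (hC s (hI hs)) ?_ (norm_nonneg _) hC0
      refine ((q s k).le_opNorm _).trans ?_
      have hz' : ‖z‖ ≤ r1 := by
        simp only [Metric.mem_eball, edist_zero_right] at hz
        have : ‖z‖₊ < r1 := by exact_mod_cast hz
        exact_mod_cast this.le
      have : ∏ _i : Fin k, ‖z‖ = ‖z‖ ^ k := by simp
      rw [this]
      exact mul_le_mul (hqM s (hI hs) k) (pow_le_pow_left₀ (norm_nonneg _) hz' k) (by positivity) (by positivity)
    · exact Filter.Eventually.of_forall fun s hs => hMs'.mul_left C
    · exact intervalIntegrable_const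
    · exact Filter.Eventually.of_forall fun s hs => (hsum s (hI hs) z hz).mul_left (c s)

open MeasureTheory in
lemma pa_local {E : Type*} [NormedAddCommGroup E] [NormedSpace ℂ E]
    (κ : ℂ × E → ℂ) (γ c : ℝ → ℂ) (hγ : Continuous γ)
    (hc : Continuous c) (p : E) (s0 : ℝ) (h : AnalyticAt ℂ κ (γ s0, p)) :
    ∃ ε > 0, ∀ u v, s0 - ε < u → u ≤ v → v < s0 + ε →
      AnalyticAt ℂ (fun x => ∫ s in u..v, c s * κ (γ s, x)) p ∧
      ∀ᶠ x in nhds p, IntervalIntegrable (fun s => c s * κ (γ s, x)) volume u v := by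
  obtain ⟨P, r, hP⟩ := h
  obtain ⟨r1, hr1, hr1'⟩ : ∃ r1 : NNReal, 0 < r1 ∧ (r1 + r1 : ENNReal) < r := by
    obtain ⟨r2, h0, h2⟩ := ENNReal.lt_iff_exists_nnreal_btwn.1 hP.r_pos
    have h0' : 0 < r2 := by exact_mod_cast h0
    refine ⟨r2 / 2, by positivity, ?_⟩
    have : ((r2 / 2 : NNReal) : ENNReal) + ((r2 / 2 : NNReal) : ENNReal) = r2 := by
      rw [← ENNReal.coe_add, add_halves]
    rwa [this]
  have hrad : (r1 + r1 : ENNReal) < P.radius := hr1'.trans_le hP.r_le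
  have hr1P : (r1 : ENNReal) < P.radius := lt_of_le_of_lt (by simp) hrad
  obtain ⟨M, hMs, hM⟩ := changeOrigin_bound P r1 hrad
  obtain ⟨ε, hε, hεγ⟩ := Metric.continuousAt_iff.1 (hγ.continuousAt (x := s0)) (r1 : ℝ) hr1
  refine ⟨ε, hε, fun u v hu huv hv => ?_⟩
  obtain ⟨y, hy⟩ : ∃ y : ℝ → ℂ × E, y = fun s => (γ s - γ s0, 0) := ⟨_, rfl⟩
  have hin : ∀ s ∈ Icc u v, ‖y s‖₊ < r1 := fun s hs => by
    have : dist s s0 < ε := by rw [Real.dist_eq, abs_lt]; constructor <;> linarith [hs.1, hs.2]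
    have := hεγ this
    rw [dist_eq_norm] at this
    have hyn : ‖y s‖₊ = ‖γ s - γ s0‖₊ := by simp [hy, Prod.nnnorm_def]
    rw [hyn]
    exact_mod_cast this
  have hyc : Continuous y := by rw [hy]; fun_prop
  constructor
  · refine pa_series (fun s x => κ (γ s, x)) c hc p u v huv (fun s k =>
      (P.changeOrigin (y s) k).compContinuousLinearMap (fun _ => ContinuousLinearMap.inr ℂ ℂ E))
      M r1 hr1 hMs ?_ ?_ ?_
    · intro s hs k
      refine le_trans ?_ (hM (y s) (hin s hs) k)
      refine (ContinuousMultilinearMap.norm_compContinuousLinearMap_le _ _).trans ?_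
      refine mul_le_of_le_one_right (norm_nonneg _) ?_
      refine Finset.prod_le_one (fun _ _ => norm_nonneg _) fun _ _ => ?_
      exact ContinuousLinearMap.norm_inr_le_one ℂ ℂ E
    · intro k
      have h1 := (P.hasFPowerSeriesOnBall_changeOrigin k (lt_of_le_of_lt (by simp) hr1P)).continuousOn
      have h2 : ContinuousOn (fun s => P.changeOrigin (y s) k) (Icc u v) := by
        refine h1.comp hyc.continuousOn fun s hs => ?_
        simp only [Metric.mem_eball, edist_zero_right]
        exact lt_trans (ENNReal.coe_lt_coe.2 (hin s hs)) hr1P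
      exact (ContinuousMultilinearMap.compContinuousLinearMapL (fun _ => ContinuousLinearMap.inr ℂ ℂ E)).continuous.comp_continuousOn h2
    · intro s hs z hz
      have hlt : (‖y s‖₊ : ENNReal) < r :=
        lt_trans (ENNReal.coe_lt_coe.2 (hin s hs)) (lt_of_le_of_lt (by simp) hr1')
      have h1 := hP.changeOrigin hlt
      have h2 := h1.hasSum (y := (0, z)) (by
        simp only [Metric.mem_eball, edist_zero_right] at hz ⊢
        have : ‖((0 : ℂ), z)‖ₑ = ‖z‖ₑ := by
          simp [enorm, Prod.nnnorm_def]
        rw [this]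
        refine hz.trans_le ?_
        refine ENNReal.le_sub_of_add_le_right (by simp) ?_
        refine le_trans ?_ hr1'.le
        gcongr
        exact (hin s hs).le)
      have h3 : ((γ s0, p) + y s + (0, z) : ℂ × E) = (γ s, p + z) := by simp [hy]
      rw [h3] at h2
      exact h2
  · filter_upwards [Metric.eball_mem_nhds p (show (0 : ENNReal) < r1 by exact_mod_cast hr1)] with x hx
    apply ContinuousOn.intervalIntegrable
    rw [uIcc_of_le huv]
    refine hc.continuousOn.mul ?_
    refine hP.continuousOn.comp (by fun_prop) fun s hs => ?_
    have h4 : (γ s, x) = (γ s0, p) + (y s + (0, x - p)) := by simp [hy]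
    rw [h4, Metric.mem_eball, edist_comm, edist_eq_enorm_sub]
    have h5 : ‖(γ s0, p) - ((γ s0, p) + (y s + (0, x - p)))‖ₑ ≤ ‖y s‖ₑ + ‖x - p‖ₑ := by
      rw [sub_add_cancel_left, enorm_neg]
      refine (enorm_add_le _ _).trans ?_
      gcongr
      simp [enorm, Prod.nnnorm_def]
    refine lt_of_le_of_lt h5 (lt_of_le_of_lt ?_ hr1')
    gcongr
    · exact ENNReal.coe_le_coe.2 (hin s hs).le
    · rw [Metric.mem_eball, edist_eq_enorm_sub] at hx; exact hx.le

open MeasureTheory in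
lemma pa_analytic {E : Type*} [NormedAddCommGroup E] [NormedSpace ℂ E]
    (κ : ℂ × E → ℂ) (γ c : ℝ → ℂ) (hγ : Continuous γ)
    (hc : Continuous c) (p : E) (a b : ℝ) (hab : a ≤ b)
    (h : ∀ s ∈ Icc a b, AnalyticAt ℂ κ (γ s, p)) :
    AnalyticAt ℂ (fun x => ∫ s in a..b, c s * κ (γ s, x)) p := by
  refine (interval_ind (p := fun u v => AnalyticAt ℂ (fun x => ∫ s in u..v, c s * κ (γ s, x)) p ∧
      ∀ᶠ x in nhds p, IntervalIntegrable (fun s => c s * κ (γ s, x)) volume u v) hab ?_ ?_).1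
  · rintro x y z - - - - ⟨h1, h2⟩ ⟨h3, h4⟩
    constructor
    · refine (h1.add h3).congr ?_
      filter_upwards [h2, h4] with w hw1 hw2
      exact intervalIntegral.integral_add_adjacent_intervals hw1 hw2
    · filter_upwards [h2, h4] with w hw1 hw2 using hw1.trans hw2
  · intro s hs
    obtain ⟨ε, hε, H⟩ := pa_local κ γ c hγ hc p s (h s hs)
    exact ⟨ε, hε, fun u v _ _ => H u v⟩


open Filter Topology in
lemma glue_div {E : Type*} [NormedAddCommGroup E] [NormedSpace ℂ E] (Ω : Set E) (hΩ : IsOpen Ω)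
    (Q G : E → ℂ) (n : ℕ)
    (hd : ∀ v ∈ Ω, (𝓝[{w | Q w ≠ 0}] v).NeBot)
    (hl : ∀ v ∈ Ω, ∃ k, AnalyticAt ℂ k v ∧ ∀ᶠ w in 𝓝 v, G w = Q w ^ n * k w) :
    ∃ h, AnalyticOnNhd ℂ h Ω ∧ ∀ v ∈ Ω, G v = Q v ^ n * h v := by
  have key : ∀ v ∈ Ω, ∀ k : E → ℂ, AnalyticAt ℂ k v → (∀ᶠ w in 𝓝 v, G w = Q w ^ n * k w) →
      (fun v => limUnder (𝓝[{w | Q w ≠ 0}] v) (fun w => G w / Q w ^ n)) =ᶠ[𝓝 v] k := by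
    intro v hv k hk hG
    filter_upwards [hΩ.mem_nhds hv, hk.eventually_analyticAt, hG.eventually_nhds] with w hw hkw hGw
    have := hd w hw
    apply Tendsto.limUnder_eq
    have h1 : Tendsto k (𝓝[{w | Q w ≠ 0}] w) (𝓝 (k w)) :=
      hkw.continuousAt.tendsto.mono_left nhdsWithin_le_nhds
    refine h1.congr' ?_
    filter_upwards [self_mem_nhdsWithin, nhdsWithin_le_nhds hGw] with z hz hGz
    rw [hGz, mul_div_cancel_left₀ _ (pow_ne_zero _ hz)]
  refine ⟨fun v => limUnder (𝓝[{w | Q w ≠ 0}] v) (fun w => G w / Q w ^ n),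
    fun v hv => ?_, fun v hv => ?_⟩
  · obtain ⟨k, hk, hG⟩ := hl v hv
    exact hk.congr (key v hv k hk hG).symm
  · obtain ⟨k, hk, hG⟩ := hl v hv
    have := (key v hv k hk hG).eq_of_nhds
    beta_reduce
    rw [this]
    exact hG.self_of_nhds

/-- sector in the plane -/
def Sec (α β : ℝ) : Set ℂ :=
  {w | w ≠ 0 ∧ ∃ θ ∈ Set.Ioo α β, w = (‖w‖ : ℂ) * Complex.exp (θ * Complex.I)}

lemma isOpen_Sec (α β : ℝ) : IsOpen (Sec α β) := by
  have : Sec α β = Complex.exp '' {z | z.im ∈ Ioo α β} := by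
    ext w
    constructor
    · rintro ⟨h0, θ, hθ, hw⟩
      refine ⟨Real.log ‖w‖ + θ * I, by simpa using hθ, ?_⟩
      rw [Complex.exp_add, ← Complex.ofReal_exp, Real.exp_log (norm_pos_iff.2 h0), ← hw]
    · rintro ⟨z, hz, rfl⟩
      refine ⟨Complex.exp_ne_zero _, z.im, hz, ?_⟩
      rw [Complex.norm_exp, Complex.ofReal_exp, ← Complex.exp_add, Complex.re_add_im]
  rw [this]
  exact Complex.isOpenMap_exp _ (isOpen_Ioo.preimage Complex.continuous_im)

open Filter Topology in
lemma frequently_Sec {α β : ℝ} (h : α < β) : ∃ᶠ w in 𝓝 (0 : ℂ), w ∈ Sec α β := by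
  rw [Metric.nhds_basis_ball.frequently_iff]
  intro ε hε
  have hn : ‖((ε / 2 : ℝ) : ℂ) * Complex.exp (((α + β) / 2 : ℝ) * I)‖ = ε / 2 := by
    rw [norm_mul, Complex.norm_exp_ofReal_mul_I, mul_one, Complex.norm_real, Real.norm_eq_abs,
      abs_of_pos (by positivity)]
  refine ⟨((ε / 2 : ℝ) : ℂ) * Complex.exp (((α + β) / 2 : ℝ) * I), ?_, ?_, (α + β) / 2,
    ⟨by linarith, by linarith⟩, ?_⟩
  · rw [mem_ball_zero_iff, hn]; linarith
  · rw [← norm_pos_iff, hn]; positivity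
  · rw [hn]

open Filter Topology in
lemma div1_local {α β : ℝ} (hαβ : α < β) (u q : ℂ → ℂ) (s0 : ℂ) (n : ℕ) (C : ℝ)
    (hu : AnalyticAt ℂ u s0) (hq : AnalyticAt ℂ q s0) (hq0 : ∀ᶠ s in 𝓝[≠] s0, q s ≠ 0)
    (hb : ∀ᶠ s in 𝓝 s0, q s ∈ Sec α β → ‖u s‖ ≤ C * ‖q s‖ ^ n) :
    ∃ k, AnalyticAt ℂ k s0 ∧ ∀ᶠ s in 𝓝 s0, u s = q s ^ n * k s := by
  by_cases h0 : q s0 ≠ 0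
  · refine ⟨fun s => u s / q s ^ n, hu.div (hq.pow n) (pow_ne_zero _ h0), ?_⟩
    filter_upwards [hq.continuousAt.eventually_ne h0] with s hs
    rw [mul_div_cancel₀]
    exact pow_ne_zero _ hs
  push Not at h0
  by_cases hu0 : ∀ᶠ s in 𝓝 s0, u s = 0
  · exact ⟨fun _ => 0, analyticAt_const, by simpa using hu0⟩
  have hq0' : ¬ ∀ᶠ s in 𝓝 s0, q s = 0 := fun h => by
    obtain ⟨s, h1, h2⟩ := (hq0.and (h.filter_mono nhdsWithin_le_nhds)).exists
    exact h1 h2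
  obtain ⟨m, q1, hq1, hq1n, hqe⟩ := hq.exists_eventuallyEq_pow_smul_nonzero_iff.2 hq0'
  obtain ⟨l, u1, hu1, hu1n, hue⟩ := hu.exists_eventuallyEq_pow_smul_nonzero_iff.2 hu0
  simp only [smul_eq_mul] at hqe hue
  by_cases hl : m * n ≤ l
  · refine ⟨fun s => (s - s0) ^ (l - m * n) * u1 s / q1 s ^ n,
      AnalyticAt.div (by fun_prop) (hq1.pow n) (pow_ne_zero _ hq1n), ?_⟩
    filter_upwards [hqe, hue, hq1.continuousAt.eventually_ne hq1n] with s h1 h2 h3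
    rw [h1, h2, mul_pow, ← pow_mul]
    obtain ⟨j, rfl⟩ := Nat.exists_eq_add_of_le hl
    rw [Nat.add_sub_cancel_left, pow_add]
    field_simp
  exfalso
  push Not at hl
  -- frequently in sector
  have hfr : ∃ᶠ s in 𝓝 s0, q s ∈ Sec α β := by
    rcases hq.eventually_constant_or_nhds_le_map_nhds with h | h
    · exact absurd (by simpa [h0] using h) hq0'
    · rw [h0] at h
      exact ((frequently_Sec hαβ).filter_mono h)
  have hlim : Tendsto (fun s => ‖u1 s‖ - C * (‖s - s0‖ ^ (m * n - l) * ‖q1 s‖ ^ n)) (𝓝 s0)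
      (𝓝 (‖u1 s0‖ - C * (‖s0 - s0‖ ^ (m * n - l) * ‖q1 s0‖ ^ n))) := by
    have := hu1.continuousAt
    have := hq1.continuousAt
    have hc : ContinuousAt (fun s => ‖u1 s‖ - C * (‖s - s0‖ ^ (m * n - l) * ‖q1 s‖ ^ n)) s0 := by
      fun_prop
    exact hc
  have hpos : 0 < ‖u1 s0‖ - C * (‖s0 - s0‖ ^ (m * n - l) * ‖q1 s0‖ ^ n) := by
    rw [sub_self, norm_zero, zero_pow (by omega)]
    simpa using hu1n
  obtain ⟨s, hs, hs1, hs2, hs3, hs4⟩ :=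
    (hfr.and_eventually (hb.and (hqe.and (hue.and (hlim.eventually_const_lt hpos))))).exists
  have hb' := hs1 hs
  have hsne : s - s0 ≠ 0 := by
    intro h
    rw [sub_eq_zero] at h
    exact hs.1 (h ▸ h0)
  rw [hs2, hs3, norm_mul, norm_mul, norm_pow, norm_pow, mul_pow, ← pow_mul] at hb'
  have hsp : 0 < ‖s - s0‖ ^ l := pow_pos (norm_pos_iff.2 hsne) _
  have he : ‖s - s0‖ ^ (m * n) = ‖s - s0‖ ^ l * ‖s - s0‖ ^ (m * n - l) := by
    rw [← pow_add]; congr 1; omega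
  rw [he] at hb'
  have : ‖s - s0‖ ^ l * ‖u1 s‖ ≤ ‖s - s0‖ ^ l * (C * (‖s - s0‖ ^ (m * n - l) * ‖q1 s‖ ^ n)) := by
    calc _ ≤ _ := hb'
      _ = _ := by ring
  have := le_of_mul_le_mul_left this hsp
  linarith

open Filter Topology in
lemma neBot_of_punctured {q : ℂ → ℂ} {s : ℂ} (h : ∀ᶠ z in 𝓝[≠] s, q z ≠ 0) :
    (𝓝[{w | q w ≠ 0}] s).NeBot := by
  have : 𝓝[≠] s ≤ 𝓝[{w | q w ≠ 0}] s :=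
    le_inf nhdsWithin_le_nhds (le_principal_iff.2 h)
  exact NeBot.mono inferInstance this

open Filter Topology in
lemma div1 {α β : ℝ} (hαβ : α < β) (u q : ℂ → ℂ) (D : Set ℂ) (hD : IsOpen D)
    (hDc : IsPreconnected D) (n : ℕ) (C : ℝ)
    (hu : AnalyticOnNhd ℂ u D) (hq : AnalyticOnNhd ℂ q D) (hq0 : ∃ s ∈ D, q s ≠ 0)
    (hb : ∀ s ∈ D, q s ∈ Sec α β → ‖u s‖ ≤ C * ‖q s‖ ^ n) :
    ∃ k, AnalyticOnNhd ℂ k D ∧ ∀ s ∈ D, u s = q s ^ n * k s := by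
  have hne : ∀ s ∈ D, ∀ᶠ z in 𝓝[≠] s, q z ≠ 0 := by
    intro s hs
    by_contra h
    rw [not_eventually] at h
    simp only [not_not] at h
    obtain ⟨t, ht, htq⟩ := hq0
    exact htq (hq.eqOn_zero_of_preconnected_of_frequently_eq_zero hDc hs h ht)
  refine glue_div D hD q u n (fun s hs => neBot_of_punctured (hne s hs)) fun s hs => ?_
  refine div1_local hαβ u q s n C (hu s hs) (hq s hs) (hne s hs) ?_
  filter_upwards [hD.mem_nhds hs] with z hz using hb z hz

open Filter Topology in
lemma divN {E : Type*} [NormedAddCommGroup E] [NormedSpace ℂ E] {α β : ℝ} (hαβ : α < β)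
    (Ω : Set E) (hΩ : IsOpen Ω) (Q G : E → ℂ) (n : ℕ) (C : ℝ)
    (hQ : AnalyticOnNhd ℂ Q Ω) (hG : AnalyticOnNhd ℂ G Ω)
    (hd : ∀ v ∈ Ω, ∃ᶠ w in 𝓝 v, Q w ≠ 0)
    (hb : ∀ v ∈ Ω, Q v ∈ Sec α β → ‖G v‖ ≤ C * ‖Q v‖ ^ n) :
    ∃ h, AnalyticOnNhd ℂ h Ω ∧ ∀ v ∈ Ω, G v = Q v ^ n * h v := by
  refine glue_div Ω hΩ Q G n (fun v hv => ?_) fun p hp => ?_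
  · exact Filter.frequently_mem_iff_neBot.1 (hd v hv)
  obtain ⟨r, hr, hrΩ⟩ := Metric.isOpen_iff.1 hΩ p hp
  obtain ⟨p1, hp1, hp1r⟩ := ((hd p hp).and_eventually (Metric.ball_mem_nhds p hr)).exists
  obtain ⟨e, he⟩ : ∃ e, e = p1 - p := ⟨_, rfl⟩
  have hline : ∀ z : E, AnalyticOnNhd ℂ (fun s : ℂ => z + s • e) univ := fun z s _ => by fun_prop
  have hpun : ∀ᶠ s in 𝓝[≠] (0 : ℂ), Q (p + s • e) ≠ 0 := by
    obtain ⟨D, hD⟩ : ∃ D : Set ℂ, D = {s | p + s • e ∈ Metric.ball p r} := ⟨_, rfl⟩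
    have hDpre : IsPreconnected D := by
      refine Convex.isPreconnected ?_
      have : D = (ContinuousLinearMap.toSpanSingleton ℂ e).restrictScalars ℝ ⁻¹' (Metric.ball 0 r) := by
        ext s; simp [hD]
      rw [this]
      exact (convex_ball (0 : E) r).linear_preimage _
    have hQD : AnalyticOnNhd ℂ (fun s : ℂ => Q (p + s • e)) D := fun s hs => by
      rw [hD] at hs
      exact (hQ _ (hrΩ hs)).comp_of_eq (hline p s trivial) rfl
    by_contra h
    rw [not_eventually] at h
    simp only [not_not] at h
    have h0 : (0 : ℂ) ∈ D := by rw [hD]; simpa using hr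
    have h1 : (1 : ℂ) ∈ D := by rw [hD]; simpa [he, dist_eq_norm] using hp1r
    have := hQD.eqOn_zero_of_preconnected_of_frequently_eq_zero hDpre h0 h h1
    apply hp1
    simpa [he] using this
  -- radii
  have hep : 0 < ‖e‖ + 1 := by positivity
  have hsmall : ∀ᶠ R in 𝓝[>] (0 : ℝ), R * (‖e‖ + 1) < r / 4 := by
    have : Tendsto (fun R : ℝ => R * (‖e‖ + 1)) (𝓝 0) (𝓝 (0 * (‖e‖ + 1))) :=
      (continuous_id.mul continuous_const).tendsto 0
    rw [zero_mul] at this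
    exact nhdsWithin_le_nhds (this.eventually_lt_const (by positivity))
  obtain ⟨R0, hR0, hR0'⟩ := Metric.mem_nhdsWithin_iff.1 hpun
  have hsm2 : ∀ᶠ R in 𝓝[>] (0 : ℝ), R < R0 := nhdsWithin_le_nhds (eventually_lt_nhds hR0)
  obtain ⟨R, hRs, hRR0, hR⟩ := (hsmall.and (hsm2.and self_mem_nhdsWithin)).exists
  have hRpos : 0 < R := hR
  have hmem : ∀ z ∈ Metric.ball p (r / 2), ∀ s : ℂ, ‖s‖ < 2 * R → z + s • e ∈ Ω := by
    intro z hz s hs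
    apply hrΩ
    rw [mem_ball_iff_norm] at hz ⊢
    have h1 : ‖s • e‖ ≤ 2 * (R * (‖e‖ + 1)) := by
      rw [norm_smul]
      nlinarith [norm_nonneg e, norm_nonneg s]
    calc ‖z + s • e - p‖ = ‖(z - p) + s • e‖ := by congr 1; abel
      _ ≤ ‖z - p‖ + ‖s • e‖ := norm_add_le _ _
      _ < r := by linarith
  have hcirc : ∀ s ∈ Metric.sphere (0 : ℂ) R, Q (p + s • e) ≠ 0 := by
    intro s hs
    have hs' : ‖s‖ = R := by simpa using hs
    exact hR0' ⟨by simpa [hs'] using hRR0, by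
      intro h
      rw [mem_singleton_iff] at h
      rw [h, norm_zero] at hs'; linarith⟩
  have hcirc2 : ∀ᶠ z in 𝓝 p, ∀ s ∈ Metric.sphere (0 : ℂ) R, Q (z + s • e) ≠ 0 := by
    apply (isCompact_sphere (0 : ℂ) R).eventually_forall_of_forall_eventually
    intro s hs
    have hs' : ‖s‖ = R := by simpa using hs
    have h1 : ContinuousAt (fun x : E × ℂ => Q (x.1 + x.2 • e)) (p, s) := by
      have h2 := (hQ _ (hmem p (Metric.mem_ball_self (by positivity)) s (by rw [hs']; linarith))).continuousAt
      exact ContinuousAt.comp (f := fun x : E × ℂ => x.1 + x.2 • e) (x := (p, s)) h2 (by fun_prop)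
    exact h1.eventually_ne (hcirc s hs)
  refine ⟨fun z => (2 * Real.pi * I)⁻¹ * ∮ s in C(0, R), (s - 0)⁻¹ • (G (z + s • e) / Q (z + s • e) ^ n), ?_, ?_⟩
  · refine analyticAt_const.mul ?_
    unfold circleIntegral
    simp only [smul_eq_mul]
    refine pa_analytic (fun x : ℂ × E => (x.1 - 0)⁻¹ * (G (x.2 + x.1 • e) / Q (x.2 + x.1 • e) ^ n))
      (circleMap 0 R) (deriv (circleMap 0 R)) (continuous_circleMap _ _) ?_ p 0 (2 * Real.pi)
      (by positivity) ?_
    · rw [funext (deriv_circleMap 0 R)]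
      exact ((continuous_circleMap _ _).mul continuous_const)
    · intro θ _
      have hs : circleMap 0 R θ ∈ Metric.sphere (0 : ℂ) R := circleMap_mem_sphere _ hRpos.le _
      have hs' : ‖circleMap 0 R θ‖ = R := by simpa using hs
      have hm := hmem p (Metric.mem_ball_self (by positivity)) (circleMap 0 R θ) (by rw [hs']; linarith)
      have hlin : AnalyticAt ℂ (fun x : ℂ × E => x.2 + x.1 • e) (circleMap 0 R θ, p) :=
        analyticAt_snd.add (analyticAt_fst.smul analyticAt_const)
      have hGc := (hG _ hm).comp_of_eq hlin rfl
      have hQc := (hQ _ hm).comp_of_eq hlin rfl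
      refine AnalyticAt.mul ?_ (hGc.div (hQc.pow n) (pow_ne_zero _ (hcirc _ hs)))
      refine AnalyticAt.inv (analyticAt_fst.sub analyticAt_const) ?_
      simp only [sub_zero]
      rw [← norm_pos_iff, hs']; exact hRpos
  · filter_upwards [hcirc2, Metric.ball_mem_nhds p (show 0 < r / 2 by positivity)] with z hz hzr
    obtain ⟨k, hk, hku⟩ := div1 hαβ (fun s => G (z + s • e)) (fun s => Q (z + s • e))
      (Metric.ball 0 (2 * R)) Metric.isOpen_ball (convex_ball _ _).isPreconnected n C
      (fun s hs => (hG _ (hmem z hzr s (by simpa using hs))).comp_of_eq (hline z s trivial) rfl)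
      (fun s hs => (hQ _ (hmem z hzr s (by simpa using hs))).comp_of_eq (hline z s trivial) rfl)
      ⟨R, by simp [abs_of_pos hRpos, hRpos], hz _ (by simp [abs_of_pos hRpos])⟩
      (fun s hs => hb _ (hmem z hzr s (by simpa using hs)))
    have h1 : (∮ s in C(0, R), (s - 0)⁻¹ • (G (z + s • e) / Q (z + s • e) ^ n)) =
        ∮ s in C(0, R), (s - 0)⁻¹ • k s := by
      refine circleIntegral.integral_congr hRpos.le fun s hs => ?_
      have hs' : ‖s‖ = R := by simpa using hs
      rw [hku s (by rw [mem_ball_zero_iff, hs']; linarith), mul_div_cancel_left₀ _ (pow_ne_zero _ (hz s hs))]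
    have hkd : DifferentiableOn ℂ k (Metric.closedBall 0 R) :=
      hk.differentiableOn.mono (Metric.closedBall_subset_ball (by linarith))
    have h2 := hkd.circleIntegral_sub_inv_smul (w := 0) (Metric.mem_ball_self hRpos)
    rw [h1, h2]
    have h3 := hku 0 (Metric.mem_ball_self (by linarith))
    simp only [zero_smul, add_zero] at h3
    rw [h3, smul_eq_mul, inv_mul_cancel_left₀ Complex.two_pi_I_ne_zero]


lemma log_quarter {w : ℂ} (h1 : 0 < w.re) (h2 : 0 < w.im) :
    Complex.log w - Complex.log (-I * w) = Real.pi / 2 * I := by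
  have hw : w ≠ 0 := by rintro rfl; simp at h1
  have harg : 0 < w.arg := by
    have h3 : 0 ≤ w.arg := Complex.arg_nonneg_iff.2 h2.le
    rcases h3.lt_or_eq with h | h
    · exact h
    · have := Complex.arg_eq_zero_iff.1 h.symm
      linarith [this.2]
  have hargpi := Complex.arg_le_pi w
  have : Complex.log (-I * w) = Complex.log (-I) + Complex.log w := by
    rw [Complex.log_mul_eq_add_log_iff (by simp) hw, Complex.arg_neg_I]
    constructor <;> linarith [Real.pi_pos]
  rw [this, Complex.log_neg_I]
  ring

lemma side_int (z0 u m : ℂ) (hum : m ≠ 0) (a b : ℝ) (hab : a ≤ b)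
    (h : ∀ s ∈ Icc a b, 0 < (m * (z0 + s * u)).re) :
    u * ∫ s in a..b, (z0 + (s : ℂ) * u)⁻¹ =
      Complex.log (m * (z0 + b * u)) - Complex.log (m * (z0 + a * u)) := by
  have hne : ∀ s ∈ Icc a b, z0 + (s : ℂ) * u ≠ 0 := fun s hs h0 => by
    have := h s hs; rw [h0] at this; simp at this
  rw [← intervalIntegral.integral_const_mul]
  refine intervalIntegral.integral_eq_sub_of_hasDerivAt
    (f := fun s : ℝ => Complex.log (m * (z0 + s * u))) ?_ ?_
  · intro s hs
    rw [uIcc_of_le hab] at hs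
    have h1 : HasDerivAt (fun s : ℝ => m * (z0 + (s : ℂ) * u)) (m * (1 * u)) s :=
      (((Complex.ofRealCLM.hasDerivAt (x := s)).mul_const u).const_add z0).const_mul m
    have h2 := h1.clog_real (Or.inl (h s hs))
    rw [one_mul, mul_div_mul_left _ _ hum, div_eq_mul_inv] at h2
    exact h2
  · apply ContinuousOn.intervalIntegrable
    rw [uIcc_of_le hab]
    refine continuousOn_const.mul (ContinuousOn.inv₀ (by fun_prop) hne)

lemma rect_winding (x0 x1 y0 y1 : ℝ) (t : ℂ) (h1 : x0 < t.re) (h2 : t.re < x1) (h3 : y0 < t.im)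
    (h4 : t.im < y1) :
    (∫ s in x0..x1, ((s : ℂ) + y0 * I - t)⁻¹) - (∫ s in x0..x1, ((s : ℂ) + y1 * I - t)⁻¹)
    + I * (∫ s in y0..y1, ((x1 : ℂ) + s * I - t)⁻¹) - I * (∫ s in y0..y1, ((x0 : ℂ) + s * I - t)⁻¹)
    = 2 * Real.pi * I := by
  have hB := side_int (y0 * I - t) 1 I (by simp) x0 x1 (by linarith) (by
    intro s hs; simp; linarith)
  have hT := side_int (y1 * I - t) 1 (-I) (by simp) x0 x1 (by linarith) (by
    intro s hs; simp; linarith)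
  have hR := side_int (x1 - t) I 1 (by simp) y0 y1 (by linarith) (by
    intro s hs; simp; linarith)
  have hL := side_int (x0 - t) I (-1) (by simp) y0 y1 (by linarith) (by
    intro s hs; simp; linarith)
  have e1 : ∀ y s : ℝ, (s : ℂ) + y * I - t = (y * I - t) + s * 1 := fun y s => by ring
  have e2 : ∀ x s : ℝ, (x : ℂ) + s * I - t = (x - t) + s * I := fun x s => by ring
  simp only [← e1] at hB hT
  simp only [← e2] at hR hL
  rw [one_mul] at hB hT
  rw [hB, hT, hR, hL]
  have q1 := log_quarter (w := I * (x1 + y0 * I - t)) (by simp; linarith) (by simp; linarith)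
  have q2 := log_quarter (w := 1 * (x1 + y1 * I - t)) (by simp; linarith) (by simp; linarith)
  have q3 := log_quarter (w := -I * (x0 + y1 * I - t)) (by simp; linarith) (by simp; linarith)
  have q4 := log_quarter (w := -1 * (x0 + y0 * I - t)) (by simp; linarith) (by simp; linarith)
  have r1 : ∀ z : ℂ, -I * (I * z) = 1 * z := fun z => by
    rw [← mul_assoc, neg_mul, I_mul_I, neg_neg]
  have r2 : ∀ z : ℂ, -I * (-I * z) = -1 * z := fun z => by
    rw [← mul_assoc, neg_mul_neg, I_mul_I]
  have r3 : ∀ z : ℂ, -I * (-1 * z) = I * z := fun z => by ring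
  rw [r1] at q1
  rw [one_mul] at q2
  rw [r2] at q3
  rw [r3] at q4
  rw [one_mul] at q1
  simp only [one_mul]
  linear_combination q1 + q2 + q3 + q4

lemma rect_cauchy (x0 x1 y0 y1 : ℝ) (t : ℂ) (h1 : x0 < t.re) (h2 : t.re < x1) (h3 : y0 < t.im)
    (h4 : t.im < y1) (φ : ℂ → ℂ) (hφ : DifferentiableOn ℂ φ (Icc x0 x1 ×ℂ Icc y0 y1)) :
    (∫ s in x0..x1, φ (s + y0 * I) * ((s : ℂ) + y0 * I - t)⁻¹)
    - (∫ s in x0..x1, φ (s + y1 * I) * ((s : ℂ) + y1 * I - t)⁻¹)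
    + I * (∫ s in y0..y1, φ (x1 + s * I) * ((x1 : ℂ) + s * I - t)⁻¹)
    - I * (∫ s in y0..y1, φ (x0 + s * I) * ((x0 : ℂ) + s * I - t)⁻¹)
    = 2 * Real.pi * I * φ t := by
  have hx : x0 ≤ x1 := by linarith
  have hy : y0 ≤ y1 := by linarith
  have hnt : Icc x0 x1 ×ℂ Icc y0 y1 ∈ nhds t := by
    refine Filter.mem_of_superset ((isOpen_Ioo.reProdIm isOpen_Ioo).mem_nhds
      (show t ∈ Ioo x0 x1 ×ℂ Ioo y0 y1 from ⟨⟨h1, h2⟩, ⟨h3, h4⟩⟩)) ?_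
    intro z hz
    exact ⟨Ioo_subset_Icc_self hz.1, Ioo_subset_Icc_self hz.2⟩
  have hds : DifferentiableOn ℂ (dslope φ t) (Icc x0 x1 ×ℂ Icc y0 y1) :=
    (Complex.differentiableOn_dslope hnt).2 hφ
  have h0 := Complex.integral_boundary_rect_eq_zero_of_differentiableOn (dslope φ t)
    (⟨x0, y0⟩ : ℂ) ⟨x1, y1⟩ (by simpa [uIcc_of_le hx, uIcc_of_le hy] using hds)
  simp only [smul_eq_mul] at h0
  have hW := rect_winding x0 x1 y0 y1 t h1 h2 h3 h4
  have key : ∀ (a b : ℝ) (γ : ℝ → ℂ), a ≤ b → Continuous γ → (∀ s ∈ Icc a b, γ s ≠ t) →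
      (∀ s ∈ Icc a b, γ s ∈ Icc x0 x1 ×ℂ Icc y0 y1) →
      ∫ s in a..b, dslope φ t (γ s) = (∫ s in a..b, φ (γ s) * (γ s - t)⁻¹)
        - φ t * ∫ s in a..b, (γ s - t)⁻¹ := by
    intro a b γ hab hγ hne hmem
    have hinv : ContinuousOn (fun s => (γ s - t)⁻¹) (Icc a b) :=
      ContinuousOn.inv₀ (by fun_prop) fun s hs => sub_ne_zero.2 (hne s hs)
    have hφγ : ContinuousOn (fun s => φ (γ s)) (Icc a b) :=
      hφ.continuousOn.comp hγ.continuousOn hmem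
    rw [← intervalIntegral.integral_const_mul, ← intervalIntegral.integral_sub]
    · refine intervalIntegral.integral_congr fun s hs => ?_
      rw [uIcc_of_le hab] at hs
      rw [dslope_of_ne _ (hne s hs), slope_def_field]
      field_simp
    · exact ContinuousOn.intervalIntegrable (by rw [uIcc_of_le hab]; exact hφγ.mul hinv)
    · exact ContinuousOn.intervalIntegrable (by rw [uIcc_of_le hab]; exact continuousOn_const.mul hinv)
  have kB := key x0 x1 (fun s => s + y0 * I) hx (by fun_prop)
    (fun s hs h => by rw [← h] at h3; simp at h3)
    (fun s hs => ⟨by simpa using hs, by simpa using hy⟩)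
  have kT := key x0 x1 (fun s => s + y1 * I) hx (by fun_prop)
    (fun s hs h => by rw [← h] at h4; simp at h4)
    (fun s hs => ⟨by simpa using hs, by simpa using hy⟩)
  have kR := key y0 y1 (fun s => x1 + s * I) hy (by fun_prop)
    (fun s hs h => by rw [← h] at h2; simp at h2)
    (fun s hs => ⟨by simpa using hx, by simpa using hs⟩)
  have kL := key y0 y1 (fun s => x0 + s * I) hy (by fun_prop)
    (fun s hs h => by rw [← h] at h1; simp at h1)
    (fun s hs => ⟨by simpa using hx, by simpa using hs⟩)
  rw [kB, kT, kR, kL] at h0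
  linear_combination h0 + φ t * hW

lemma annulus_cauchy (c1 c2 : ℝ) (hc1 : 0 < c1) (t : ℂ) (h1 : c1 < ‖t‖) (h2 : ‖t‖ < c2)
    (φ : ℂ → ℂ) (U : Set ℂ) (hU : IsOpen U) (hUs : ∀ z : ℂ, c1 ≤ ‖z‖ → ‖z‖ ≤ c2 → z ∈ U)
    (hφ : DifferentiableOn ℂ φ U) :
    (∮ w in C(0, c2), φ w * (w - t)⁻¹) - (∮ w in C(0, c1), φ w * (w - t)⁻¹)
      = 2 * Real.pi * I * φ t := by
  have hc2 : 0 < c2 := by linarith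
  have hds : DifferentiableOn ℂ (dslope φ t) U :=
    (Complex.differentiableOn_dslope (hU.mem_nhds (hUs t h1.le h2.le))).2 hφ
  have h0 := Complex.circleIntegral_eq_of_differentiable_on_annulus_off_countable (c := 0) hc1
    (by linarith : c1 ≤ c2) (f := dslope φ t) (s := ∅) countable_empty
    (hds.continuousOn.mono (fun z hz => hUs z (by simpa using hz.2) (by simpa using hz.1)))
    (fun z hz => (hds z (hUs z (by have := hz.1.2; simp at this; exact this.le)
      (by have := hz.1.1; simp at this; exact this.le))).differentiableAt
      (hU.mem_nhds (hUs z (by have := hz.1.2; simp at this; exact this.le)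
      (by have := hz.1.1; simp at this; exact this.le))))
  have key : ∀ c, 0 < c → c1 ≤ c → c ≤ c2 → c ≠ ‖t‖ →
      (∮ w in C(0, c), dslope φ t w) = (∮ w in C(0, c), φ w * (w - t)⁻¹)
        - φ t * ∮ w in C(0, c), (w - t)⁻¹ := by
    intro c hc hcc1 hcc2 hct
    have hne : ∀ w ∈ Metric.sphere (0 : ℂ) c, w ≠ t := fun w hw h => by
      rw [h, mem_sphere_zero_iff_norm] at hw; exact hct hw.symm
    have hinv : ContinuousOn (fun w => (w - t)⁻¹) (Metric.sphere (0 : ℂ) c) :=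
      ContinuousOn.inv₀ (by fun_prop) fun s hs => sub_ne_zero.2 (hne s hs)
    have hφγ : ContinuousOn φ (Metric.sphere (0 : ℂ) c) :=
      hφ.continuousOn.mono fun w hw => by
        rw [mem_sphere_zero_iff_norm] at hw
        exact hUs w (by linarith) (by linarith)
    rw [← circleIntegral.integral_const_mul, ← circleIntegral.integral_sub]
    · refine circleIntegral.integral_congr hc.le fun s hs => ?_
      rw [dslope_of_ne _ (hne s hs), slope_def_field]
      field_simp
    · exact (hφγ.mul hinv).circleIntegrable hc.le
    · exact (continuousOn_const.mul hinv).circleIntegrable hc.le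
  rw [key c2 hc2 (by linarith) le_rfl (by linarith), key c1 hc1 le_rfl (by linarith) (by linarith)] at h0
  have i2 : (∮ w in C(0, c2), (w - t)⁻¹) = 2 * Real.pi * I :=
    circleIntegral.integral_sub_inv_of_mem_ball (by simpa using h2)
  have i1 : (∮ w in C(0, c1), (w - t)⁻¹) = 0 := by
    apply DiffContOnCl.circleIntegral_eq_zero hc1.le
    apply DifferentiableOn.diffContOnCl
    rw [closure_ball _ hc1.ne']
    intro w hw
    refine DifferentiableAt.differentiableWithinAt (DifferentiableAt.inv (by fun_prop) ?_)
    rw [sub_ne_zero]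
    rintro rfl
    simp at hw; linarith
  rw [i1, i2] at h0
  linear_combination h0


def cyl (d : ℕ) (A : Set ℂ) (δ : ℝ) : Set (Fin (d + 2) → ℂ) :=
  {v | v 0 ∈ A ∧ ∀ j, j ≠ 0 → ‖v j‖ < δ}

lemma cyl_mono {d : ℕ} {A A' : Set ℂ} {δ δ' : ℝ} (h : A' ⊆ A) (h' : δ' ≤ δ) :
    cyl d A' δ' ⊆ cyl d A δ := fun _ hv => ⟨h hv.1, fun j hj => (hv.2 j hj).trans_le h'⟩

lemma isOpen_cyl {d : ℕ} {A : Set ℂ} {δ : ℝ} (hA : IsOpen A) : IsOpen (cyl d A δ) := by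
  have : cyl d A δ = (fun v : Fin (d + 2) → ℂ => v 0) ⁻¹' A ∩
      ⋂ j, {v : Fin (d + 2) → ℂ | j ≠ 0 → ‖v j‖ < δ} := by
    ext v; simp [cyl]
  rw [this]
  refine (hA.preimage (continuous_apply 0)).inter (isOpen_iInter_of_finite fun j => ?_)
  by_cases hj : j = 0
  · simp [hj]
  · simp only [ne_eq, hj, not_false_eq_true, forall_const]
    exact isOpen_lt (by fun_prop) continuous_const

lemma bdd_cyl {d : ℕ} {A K : Set ℂ} {δ δ' : ℝ} (hK : IsCompact K) (hKA : K ⊆ A) (hδ : δ' < δ)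
    (h : (Fin (d + 2) → ℂ) → ℂ) (hh : ContinuousOn h (cyl d A δ)) :
    ∃ M, ∀ v ∈ cyl d K δ', ‖h v‖ ≤ M := by
  have hc : IsCompact (Set.pi univ
      (fun j : Fin (d + 2) => if j = 0 then K else Metric.closedBall (0 : ℂ) δ')) := by
    refine isCompact_univ_pi fun j => ?_
    split_ifs
    · exact hK
    · exact isCompact_closedBall _ _
  obtain ⟨M, hM⟩ := hc.exists_bound_of_continuousOn (f := h) (hh.mono (by
    intro v hv
    refine ⟨hKA (by simpa using hv 0 (mem_univ _)), fun j hj => ?_⟩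
    have := hv j (mem_univ _)
    simp [hj] at this
    linarith))
  refine ⟨M, fun v hv => hM v fun j _ => ?_⟩
  by_cases hj : j = 0
  · subst hj; simpa using hv.1
  · simpa [hj] using (hv.2 j hj).le

lemma dens_le {E : Type*} [TopologicalSpace E] {W A : Set E} (hW : IsOpen W) (hA : Dense A)
    (φ ψ : E → ℝ) (hφ : ContinuousOn φ W) (hψ : ContinuousOn ψ W)
    (h : ∀ x ∈ W, x ∈ A → φ x ≤ ψ x) : ∀ x ∈ W, φ x ≤ ψ x := by
  intro x hx
  have hcl : x ∈ closure (W ∩ A) := hA.open_subset_closure_inter hW hx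
  exact ContinuousWithinAt.closure_le hcl ((hφ x hx).mono inter_subset_left)
    ((hψ x hx).mono inter_subset_left) fun y hy => h y hy.1 hy.2

lemma dense_ne {d : ℕ} (ξ : ℂ) (j : Fin (d + 2)) : Dense {v : Fin (d + 2) → ℂ | v j ≠ ξ} := by
  have := (dense_compl_singleton ξ).preimage (isOpenMap_eval (X := fun _ : Fin (d+2) => ℂ) j)
  exact this

lemma dense_all_ne {d : ℕ} : Dense {v : Fin (d + 2) → ℂ | ∀ j, v j ≠ 0} := by
  have := dense_pi (α := fun _ : Fin (d+2) => ℂ) univ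
    (fun i (_ : i ∈ univ) => dense_compl_singleton (0 : ℂ))
  convert this using 1
  ext v; simp [Set.mem_pi]

lemma isOpen_polydisk (d : ℕ) (r : ℝ) : IsOpen (polydisk d r) := by
  have : polydisk d r = ⋂ j, {v : Fin d → ℂ | ‖v j‖ < r} := by ext v; simp [polydisk]
  rw [this]
  exact isOpen_iInter_of_finite fun j => isOpen_lt (by fun_prop) continuous_const

lemma convex_polydisk (d : ℕ) (r : ℝ) : Convex ℝ (polydisk d r) := by
  have : polydisk d r = Set.pi univ (fun _ => Metric.ball (0 : ℂ) r) := by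
    ext v; simp [polydisk, Set.mem_pi]
  rw [this]
  exact convex_pi fun j _ => convex_ball _ _

lemma mem_PSector {d : ℕ} {P : (Fin d → ℂ) → ℂ} {a b r : ℝ} {x : Fin d → ℂ} :
    x ∈ PSector d P a b r ↔ x ∈ polydisk d r ∧ (∀ j, x j ≠ 0) ∧ P x ∈ Sec a b := by
  simp only [PSector, polydisk, Sec, mem_ofPred_eq, norm_pos_iff, forall_and]
  tauto

lemma isOpen_PSector {d : ℕ} {P : (Fin d → ℂ) → ℂ} {a b r : ℝ}
    (hP : AnalyticOnNhd ℂ P (polydisk d r)) : IsOpen (PSector d P a b r) := by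
  have : PSector d P a b r = (⋂ j, {x : Fin d → ℂ | x j ≠ 0}) ∩
      (polydisk d r ∩ P ⁻¹' Sec a b) := by
    ext x; simp only [mem_PSector, mem_inter_iff, mem_iInter, mem_ofPred_eq, mem_preimage]; tauto
  rw [this]
  refine (isOpen_iInter_of_finite fun j => ?_).inter
    (hP.continuousOn.isOpen_inter_preimage (isOpen_polydisk d r) (isOpen_Sec a b))
  exact isOpen_ne_fun (continuous_apply j) continuous_const

@[fun_prop]
lemma continuous_blowUpC (d : ℕ) (ξ : ℂ) : Continuous (blowUpC d ξ) := by
  unfold blowUpC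
  refine continuous_pi fun i => ?_
  split_ifs <;> fun_prop

lemma analyticAt_proj {ι : Type*} [Fintype ι] (j : ι) (v : ι → ℂ) :
    AnalyticAt ℂ (fun v : ι → ℂ => v j) v :=
  (ContinuousLinearMap.proj (R := ℂ) (φ := fun _ : ι => ℂ) j).analyticAt v

lemma analytic_blowUpC (d : ℕ) (ξ : ℂ) (v) : AnalyticAt ℂ (blowUpC d ξ) v := by
  unfold blowUpC
  refine AnalyticAt.pi fun i => ?_
  split_ifs
  · exact analyticAt_proj _ _
  · exact (analyticAt_const.add (analyticAt_proj _ _)).mul (analyticAt_proj _ _)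
  · exact analyticAt_proj _ _

lemma analytic_blowUpInf (d : ℕ) (v) : AnalyticAt ℂ (blowUpInf d) v := by
  unfold blowUpInf
  refine AnalyticAt.pi fun i => ?_
  split_ifs
  · exact (analyticAt_proj _ _).mul (analyticAt_proj _ _)
  · exact analyticAt_proj _ _

def upd {d : ℕ} (v : Fin (d + 2) → ℂ) (w : ℂ) : Fin (d + 2) → ℂ :=
  fun j => if j = 0 then w else v j

lemma analytic_upd {d : ℕ} {F : Type*} [NormedAddCommGroup F] [NormedSpace ℂ F]
    {g : F → Fin (d + 2) → ℂ} {k : F → ℂ} {x : F} (hg : AnalyticAt ℂ g x)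
    (hk : AnalyticAt ℂ k x) : AnalyticAt ℂ (fun x => upd (g x) (k x)) x := by
  unfold upd
  refine AnalyticAt.pi fun i => ?_
  split_ifs
  · exact hk
  · exact (analyticAt_proj i (g x)).fun_comp hg

lemma blowUpC_upd {d : ℕ} (ξ : ℂ) (v : Fin (d + 2) → ℂ) :
    blowUpC d ξ (upd v (v 0 - ξ)) = blowUpC d 0 v := by
  ext i
  simp only [blowUpC, upd]
  by_cases h0 : i = 0
  · simp [h0]
  · by_cases h1 : i = 1
    · simp [h1]
    · simp [h0, h1]

lemma blow_ne {d : ℕ} {v : Fin (d + 2) → ℂ} (h : ∀ j, v j ≠ 0) (j) : blowUpC d 0 v j ≠ 0 := by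
  simp only [blowUpC]
  split_ifs
  · exact h 1
  · simpa using ⟨h 0, h 1⟩
  · exact h j

lemma ne_of_blow {d : ℕ} {v : Fin (d + 2) → ℂ} (h : ∀ j, blowUpC d 0 v j ≠ 0) (j) : v j ≠ 0 := by
  have h0 := h 0
  have h1 := h 1
  have hj := h j
  simp [blowUpC] at h0 h1 hj
  by_cases e0 : j = 0
  · rw [e0]; exact h1.1
  · by_cases e1 : j = 1
    · rw [e1]; exact h0
    · simpa [e0, e1] using hj

open Filter Topology in
lemma freq_ne {d : ℕ} {ρ₀ : ℝ} {P : (Fin (d + 2) → ℂ) → ℂ}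
    (hP : AnalyticOnNhd ℂ P (polydisk (d + 2) ρ₀))
    (hPne : ∃ x ∈ polydisk (d + 2) ρ₀, P x ≠ 0) (v : Fin (d + 2) → ℂ)
    (hv : blowUpC d 0 v ∈ polydisk (d + 2) ρ₀) : ∃ᶠ w in 𝓝 v, P (blowUpC d 0 w) ≠ 0 := by
  intro hcon
  simp only [not_not] at hcon
  have h2 : ∀ᶠ w in 𝓝 v, blowUpC d 0 w ∈ polydisk (d + 2) ρ₀ :=
    (continuous_blowUpC d 0).continuousAt.eventually ((isOpen_polydisk _ _).mem_nhds hv)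
  obtain ⟨w, ⟨hw1, hw2⟩, hw3⟩ := (dense_ne (d := d) 0 1).inter_nhds_nonempty
    (hcon.eventually_nhds.and h2) |>.imp (fun w hw => And.intro hw.2 hw.1)
  simp only [mem_ofPred_eq] at hw3
  let J : (Fin (d + 2) → ℂ) → (Fin (d + 2) → ℂ) := fun x i =>
    if i = 0 then x 1 / x 0 else if i = 1 then x 0 else x i
  have hB0 : blowUpC d 0 w 0 = w 1 := by simp [blowUpC]
  have hJ : ContinuousAt J (blowUpC d 0 w) := by
    refine continuousAt_pi.2 fun i => ?_
    simp only [J]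
    split_ifs
    · exact ContinuousAt.div (continuous_apply _).continuousAt (continuous_apply _).continuousAt
        (by rw [hB0]; exact hw3)
    · exact (continuous_apply _).continuousAt
    · exact (continuous_apply _).continuousAt
  have hJB : J (blowUpC d 0 w) = w := by
    ext i
    by_cases h0 : i = 0
    · simp [J, blowUpC, h0, hw3]
    · by_cases h1 : i = 1
      · simp [J, blowUpC, h1]
      · simp [J, blowUpC, h0, h1]
  have hBJ : ∀ x : Fin (d + 2) → ℂ, x 0 ≠ 0 → blowUpC d 0 (J x) = x := by
    intro x hx
    ext i
    by_cases h0 : i = 0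
    · simp [J, blowUpC, h0]
    · by_cases h1 : i = 1
      · simp [J, blowUpC, h1, hx]
      · simp [J, blowUpC, h0, h1]
  have hz : P =ᶠ[𝓝 (blowUpC d 0 w)] 0 := by
    have e1 := hJ.eventually (by rw [hJB]; exact hw1)
    have e2 : ∀ᶠ x in 𝓝 (blowUpC d 0 w), x 0 ≠ 0 :=
      (continuous_apply 0).continuousAt.eventually_ne (by rw [hB0]; exact hw3)
    filter_upwards [e1, e2] with x hx1 hx2
    rw [hBJ x hx2] at hx1
    exact hx1
  obtain ⟨x, hx, hxne⟩ := hPne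
  exact hxne (hP.eqOn_zero_of_preconnected_of_eventuallyEq_zero
    (convex_polydisk _ _).isPreconnected hw2 hz hx)

open Filter Topology in
lemma diff_div {d : ℕ} {ρ₀ : ℝ} {P : (Fin (d + 2) → ℂ) → ℂ}
    (hP : AnalyticOnNhd ℂ P (polydisk (d + 2) ρ₀))
    (hPne : ∃ x ∈ polydisk (d + 2) ρ₀, P x ≠ 0) {α β : ℝ} (hαβ : α < β)
    (f : (Fin (d + 2) → ℂ) → ℂ) (Ω : Set (Fin (d + 2) → ℂ)) (hΩ : IsOpen Ω)
    (hB : ∀ v ∈ Ω, blowUpC d 0 v ∈ polydisk (d + 2) ρ₀)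
    (G1 G2 : (Fin (d + 2) → ℂ) → ℂ) (n : ℕ) (C1 C2 : ℝ)
    (hG1 : AnalyticOnNhd ℂ G1 Ω) (hG2 : AnalyticOnNhd ℂ G2 Ω)
    (h1 : ∀ v ∈ Ω, blowUpC d 0 v ∈ PSector (d + 2) P α β ρ₀ →
      ‖f (blowUpC d 0 v) - G1 v‖ ≤ C1 * ‖P (blowUpC d 0 v)‖ ^ n)
    (h2 : ∀ v ∈ Ω, blowUpC d 0 v ∈ PSector (d + 2) P α β ρ₀ →
      ‖f (blowUpC d 0 v) - G2 v‖ ≤ C2 * ‖P (blowUpC d 0 v)‖ ^ n) :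
    ∃ h, AnalyticOnNhd ℂ h Ω ∧ ∀ v ∈ Ω, G1 v - G2 v = P (blowUpC d 0 v) ^ n * h v := by
  have hQ : AnalyticOnNhd ℂ (fun v => P (blowUpC d 0 v)) Ω := fun v hv =>
    (hP _ (hB v hv)).fun_comp (analytic_blowUpC d 0 v)
  refine divN hαβ Ω hΩ (fun v => P (blowUpC d 0 v)) (fun v => G1 v - G2 v) n (C1 + C2) hQ
    (hG1.sub hG2) (fun v hv => freq_ne hP hPne v (hB v hv)) ?_
  have hW := hQ.continuousOn.isOpen_inter_preimage hΩ (isOpen_Sec α β)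
  have := dens_le hW (dense_all_ne (d := d)) (fun v => ‖G1 v - G2 v‖)
    (fun v => (C1 + C2) * ‖P (blowUpC d 0 v)‖ ^ n)
    ((hG1.sub hG2).continuousOn.norm.mono inter_subset_left)
    ((continuousOn_const.mul (hQ.continuousOn.norm.pow n)).mono inter_subset_left) ?_
  · exact fun v hv hs => this v ⟨hv, hs⟩
  · rintro v ⟨hv, hs⟩ hne
    have hm : blowUpC d 0 v ∈ PSector (d + 2) P α β ρ₀ :=
      mem_PSector.2 ⟨hB v hv, blow_ne hne, hs⟩
    have e1 := h1 v hv hm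
    have e2 := h2 v hv hm
    calc ‖G1 v - G2 v‖ = ‖(f (blowUpC d 0 v) - G2 v) - (f (blowUpC d 0 v) - G1 v)‖ := by
          congr 1; ring
      _ ≤ _ := norm_sub_le _ _
      _ ≤ _ := by linarith


def Sol (d : ℕ) (ρ₀ : ℝ) (P : (Fin (d + 2) → ℂ) → ℂ) (α β : ℝ) (f : (Fin (d + 2) → ℂ) → ℂ)
    (U : Set ℂ) (δ : ℝ) : Prop :=
  (∀ v ∈ cyl d U δ, blowUpC d 0 v ∈ polydisk (d + 2) ρ₀) ∧
  ∀ n : ℕ, ∃ (G : (Fin (d + 2) → ℂ) → ℂ) (C : ℝ), AnalyticOnNhd ℂ G (cyl d U δ) ∧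
    ∀ v ∈ cyl d U δ, blowUpC d 0 v ∈ PSector (d + 2) P α β ρ₀ →
      ‖f (blowUpC d 0 v) - G v‖ ≤ C * ‖P (blowUpC d 0 v)‖ ^ n

lemma Sol.mono {d : ℕ} {ρ₀ : ℝ} {P : (Fin (d + 2) → ℂ) → ℂ} {α β : ℝ}
    {f : (Fin (d + 2) → ℂ) → ℂ} {U U' : Set ℂ} {δ δ' : ℝ} (h : Sol d ρ₀ P α β f U δ)
    (hU : U' ⊆ U) (hδ : δ' ≤ δ) : Sol d ρ₀ P α β f U' δ' := by
  refine ⟨fun v hv => h.1 v (cyl_mono hU hδ hv), fun n => ?_⟩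
  obtain ⟨G, C, h1, h2⟩ := h.2 n
  exact ⟨G, C, h1.mono (cyl_mono hU hδ), fun v hv => h2 v (cyl_mono hU hδ hv)⟩

def Split (d : ℕ) (U1 U2 V1 V2 : Set ℂ) (δ δ' : ℝ) : Prop :=
  ∀ h : (Fin (d + 2) → ℂ) → ℂ, AnalyticOnNhd ℂ h (cyl d (U1 ∩ U2) δ) →
    ∃ (h1 h2 : (Fin (d + 2) → ℂ) → ℂ) (M : ℝ), AnalyticOnNhd ℂ h1 (cyl d V1 δ') ∧
      AnalyticOnNhd ℂ h2 (cyl d V2 δ') ∧ (∀ v ∈ cyl d V1 δ', ‖h1 v‖ ≤ M) ∧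
      (∀ v ∈ cyl d V2 δ', ‖h2 v‖ ≤ M) ∧ ∀ v ∈ cyl d (V1 ∩ V2) δ', h v = h1 v - h2 v

lemma corr_bound {a g q h : ℂ} {C M : ℝ} {n : ℕ} (h1 : ‖a - g‖ ≤ C * ‖q‖ ^ n) (h2 : ‖h‖ ≤ M) :
    ‖a - (g - q ^ n * h)‖ ≤ (C + M) * ‖q‖ ^ n := by
  calc ‖a - (g - q ^ n * h)‖ = ‖(a - g) + q ^ n * h‖ := by congr 1; ring
    _ ≤ ‖a - g‖ + ‖q ^ n * h‖ := norm_add_le _ _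
    _ = ‖a - g‖ + ‖h‖ * ‖q‖ ^ n := by rw [norm_mul, norm_pow, mul_comm]
    _ ≤ C * ‖q‖ ^ n + M * ‖q‖ ^ n := by gcongr
    _ = _ := by ring

open Filter Topology in
lemma merge_Sol {d : ℕ} {ρ₀ : ℝ} {P : (Fin (d + 2) → ℂ) → ℂ}
    (hP : AnalyticOnNhd ℂ P (polydisk (d + 2) ρ₀))
    (hPne : ∃ x ∈ polydisk (d + 2) ρ₀, P x ≠ 0) {α β : ℝ} (hαβ : α < β)
    {f : (Fin (d + 2) → ℂ) → ℂ} {U1 U2 V1 V2 : Set ℂ} {δ δ' : ℝ}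
    (hU1 : IsOpen U1) (hU2 : IsOpen U2) (hV1 : IsOpen V1) (hV2 : IsOpen V2)
    (hs1 : V1 ⊆ U1) (hs2 : V2 ⊆ U2) (hδ : δ' ≤ δ)
    (hsp : Split d U1 U2 V1 V2 δ δ') (S1 : Sol d ρ₀ P α β f U1 δ) (S2 : Sol d ρ₀ P α β f U2 δ) :
    Sol d ρ₀ P α β f (V1 ∪ V2) δ' := by
  classical
  have hc1 := cyl_mono (d := d) hs1 hδ
  have hc2 := cyl_mono (d := d) hs2 hδ
  refine ⟨?_, fun n => ?_⟩
  · rintro v ⟨h | h, hv⟩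
    · exact S1.1 v (hc1 ⟨h, hv⟩)
    · exact S2.1 v (hc2 ⟨h, hv⟩)
  obtain ⟨G1, C1, a1, b1⟩ := S1.2 n
  obtain ⟨G2, C2, a2, b2⟩ := S2.2 n
  have i1 : cyl d (U1 ∩ U2) δ ⊆ cyl d U1 δ := cyl_mono inter_subset_left le_rfl
  have i2 : cyl d (U1 ∩ U2) δ ⊆ cyl d U2 δ := cyl_mono inter_subset_right le_rfl
  obtain ⟨h, ha, hh⟩ := diff_div hP hPne hαβ f (cyl d (U1 ∩ U2) δ) (isOpen_cyl (hU1.inter hU2))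
    (fun v hv => S1.1 v (i1 hv)) G1 G2 n C1 C2 (a1.mono i1) (a2.mono i2)
    (fun v hv => b1 v (i1 hv)) (fun v hv => b2 v (i2 hv))
  obtain ⟨h1, h2, M, ah1, ah2, bh1, bh2, hsplit⟩ := hsp h ha
  set K1 : (Fin (d + 2) → ℂ) → ℂ := fun v => G1 v - P (blowUpC d 0 v) ^ n * h1 v with hK1
  set K2 : (Fin (d + 2) → ℂ) → ℂ := fun v => G2 v - P (blowUpC d 0 v) ^ n * h2 v with hK2
  have aK1 : AnalyticOnNhd ℂ K1 (cyl d V1 δ') := fun v hv =>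
    (a1 v (hc1 hv)).sub ((((hP _ (S1.1 v (hc1 hv))).fun_comp (analytic_blowUpC d 0 v)).pow n).mul
      (ah1 v hv))
  have aK2 : AnalyticOnNhd ℂ K2 (cyl d V2 δ') := fun v hv =>
    (a2 v (hc2 hv)).sub ((((hP _ (S2.1 v (hc2 hv))).fun_comp (analytic_blowUpC d 0 v)).pow n).mul
      (ah2 v hv))
  have hagree : ∀ v ∈ cyl d (V1 ∩ V2) δ', K1 v = K2 v := by
    intro v hv
    have e1 := hh v (cyl_mono (inter_subset_inter hs1 hs2) hδ hv)
    have e2 := hsplit v hv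
    rw [e2] at e1
    simp only [hK1, hK2]
    linear_combination e1
  refine ⟨fun v => if v 0 ∈ V1 then K1 v else K2 v, max (C1 + M) (C2 + M), ?_, ?_⟩
  · rintro v ⟨hv0, hv⟩
    by_cases h1 : v 0 ∈ V1
    · refine (aK1 v ⟨h1, hv⟩).congr ?_
      filter_upwards [(continuous_apply 0).continuousAt.eventually (hV1.mem_nhds h1)] with w hw
      exact (if_pos hw).symm
    · have h2 : v 0 ∈ V2 := hv0.resolve_left h1
      refine (aK2 v ⟨h2, hv⟩).congr ?_
      filter_upwards [(isOpen_cyl hV2).mem_nhds (show v ∈ cyl d V2 δ' from ⟨h2, hv⟩)] with w hw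
      split_ifs with hw1
      · exact (hagree w ⟨⟨hw1, hw.1⟩, hw.2⟩).symm
      · rfl
  · rintro v ⟨hv0, hv⟩ hm
    beta_reduce
    split_ifs with h1
    · refine (corr_bound (b1 v (hc1 ⟨h1, hv⟩) hm) (bh1 v ⟨h1, hv⟩)).trans ?_
      gcongr
      exact le_max_left _ _
    · have h2 : v 0 ∈ V2 := hv0.resolve_left h1
      refine (corr_bound (b2 v (hc2 ⟨h2, hv⟩) hm) (bh2 v ⟨h2, hv⟩)).trans ?_
      gcongr
      exact le_max_right _ _

lemma side_analytic {d : ℕ} {U : Set ℂ} {δ : ℝ} {h : (Fin (d + 2) → ℂ) → ℂ}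
    (hh : AnalyticOnNhd ℂ h (cyl d U δ)) (γ : ℝ → ℂ) (hγ : Continuous γ) (c : ℂ) (a b : ℝ)
    (hab : a ≤ b) (hγU : ∀ s ∈ Icc a b, γ s ∈ U) (A : Set ℂ)
    (hA : ∀ z ∈ A, ∀ s ∈ Icc a b, γ s ≠ z) :
    AnalyticOnNhd ℂ (fun v => ∫ s in a..b, c * (h (upd v (γ s)) * (γ s - v 0)⁻¹)) (cyl d A δ) := by
  intro v hv
  refine pa_analytic (fun p : ℂ × (Fin (d + 2) → ℂ) => h (upd p.2 p.1) * (p.1 - p.2 0)⁻¹) γ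
    (fun _ => c) hγ continuous_const v a b hab fun s hs => ?_
  have h1 : AnalyticAt ℂ h (upd v (γ s)) := hh _ ⟨by simpa [upd] using hγU s hs, fun j hj => by
    simpa [upd, hj] using hv.2 j hj⟩
  refine AnalyticAt.mul (AnalyticAt.fun_comp (g := h) h1 (analytic_upd analyticAt_snd analyticAt_fst))
    (AnalyticAt.inv (analyticAt_fst.sub ?_) ?_)
  · exact (analyticAt_proj 0 v).fun_comp (f := Prod.snd) (x := (γ s, v)) analyticAt_snd
  · exact sub_ne_zero.2 (hA _ hv.1 s hs)

lemma rect_split {d : ℕ} {U : Set ℂ} {δ : ℝ} {h : (Fin (d + 2) → ℂ) → ℂ}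
    (hh : AnalyticOnNhd ℂ h (cyl d U δ)) (x0 x1 y0 y1 : ℝ) (hx : x0 ≤ x1) (hy : y0 ≤ y1)
    (hR : Icc x0 x1 ×ℂ Icc y0 y1 ⊆ U) :
    ∃ hB hT hR hL : (Fin (d + 2) → ℂ) → ℂ,
      AnalyticOnNhd ℂ hB (cyl d {z | z.im ≠ y0} δ) ∧ AnalyticOnNhd ℂ hT (cyl d {z | z.im ≠ y1} δ) ∧
      AnalyticOnNhd ℂ hR (cyl d {z | z.re ≠ x1} δ) ∧ AnalyticOnNhd ℂ hL (cyl d {z | z.re ≠ x0} δ) ∧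
      ∀ v ∈ cyl d (Ioo x0 x1 ×ℂ Ioo y0 y1) δ, h v = hB v + hT v + hR v + hL v := by
  have hc : (2 * Real.pi * I : ℂ) ≠ 0 := by simp [Real.pi_ne_zero]
  refine ⟨_, _, _, _,
    side_analytic hh (fun s => s + y0 * I) (by fun_prop) (2 * Real.pi * I)⁻¹ x0 x1 hx
      (fun s hs => hR ⟨by simpa using hs, by simpa using hy⟩) _ ?_,
    side_analytic hh (fun s => s + y1 * I) (by fun_prop) (-(2 * Real.pi * I)⁻¹) x0 x1 hx
      (fun s hs => hR ⟨by simpa using hs, by simpa using hy⟩) _ ?_,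
    side_analytic hh (fun s => x1 + s * I) (by fun_prop) ((2 * Real.pi * I)⁻¹ * I) y0 y1 hy
      (fun s hs => hR ⟨by simpa using hx, by simpa using hs⟩) _ ?_,
    side_analytic hh (fun s => x0 + s * I) (by fun_prop) (-(2 * Real.pi * I)⁻¹ * I) y0 y1 hy
      (fun s hs => hR ⟨by simpa using hx, by simpa using hs⟩) _ ?_, ?_⟩
  · rintro z hz s - rfl; simp at hz
  · rintro z hz s - rfl; simp at hz
  · rintro z hz s - rfl; simp at hz
  · rintro z hz s - rfl; simp at hz
  · intro v hv
    have := rect_cauchy x0 x1 y0 y1 (v 0) hv.1.1.1 hv.1.1.2 hv.1.2.1 hv.1.2.2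
      (fun w => h (upd v w)) (by
        intro w hw
        have h1 : AnalyticAt ℂ h (upd v w) := hh _ ⟨by simpa [upd] using hR hw, fun j hj => by
          simpa [upd, hj] using hv.2 j hj⟩
        exact (h1.fun_comp (analytic_upd analyticAt_const
          analyticAt_id)).differentiableAt.differentiableWithinAt)
    have hu : upd v (v 0) = v := by ext j; by_cases hj : j = 0 <;> simp [upd, hj]
    simp only [hu] at this
    simp only [intervalIntegral.integral_const_mul]
    have e : h v = (2 * Real.pi * I)⁻¹ * (2 * Real.pi * I * h v) := by
      rw [← mul_assoc, inv_mul_cancel₀ hc, one_mul]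
    rw [e, ← this]
    ring

def Good (d : ℕ) (ρ₀ : ℝ) (P : (Fin (d + 2) → ℂ) → ℂ) (α β : ℝ) (f : (Fin (d + 2) → ℂ) → ℂ)
    (x0 x1 y0 y1 : ℝ) : Prop :=
  ∃ δ > 0, Sol d ρ₀ P α β f (Ioo (x0 - δ) (x1 + δ) ×ℂ Ioo (y0 - δ) (y1 + δ)) δ

lemma isOpen_rect (a b c e : ℝ) : IsOpen (Ioo a b ×ℂ Ioo c e) := isOpen_Ioo.reProdIm isOpen_Ioo

lemma rect_mono {a b c e a' b' c' e' : ℝ} (h1 : a' ≤ a) (h2 : b ≤ b') (h3 : c' ≤ c) (h4 : e ≤ e') :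
    Ioo a b ×ℂ Ioo c e ⊆ Ioo a' b' ×ℂ Ioo c' e' := fun _ hz =>
  ⟨Ioo_subset_Ioo h1 h2 hz.1, Ioo_subset_Ioo h3 h4 hz.2⟩

lemma bdd_rect {d : ℕ} {A : Set ℂ} {δ δ' : ℝ} (a b c e : ℝ) (hA : Icc a b ×ℂ Icc c e ⊆ A)
    (hδ : δ' < δ) (h : (Fin (d + 2) → ℂ) → ℂ) (hh : AnalyticOnNhd ℂ h (cyl d A δ)) :
    AnalyticOnNhd ℂ h (cyl d (Ioo a b ×ℂ Ioo c e) δ') ∧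
    ∃ M, ∀ v ∈ cyl d (Ioo a b ×ℂ Ioo c e) δ', ‖h v‖ ≤ M := by
  have hs : Ioo a b ×ℂ Ioo c e ⊆ Icc a b ×ℂ Icc c e := fun z hz =>
    ⟨Ioo_subset_Icc_self hz.1, Ioo_subset_Icc_self hz.2⟩
  refine ⟨hh.mono (cyl_mono (hs.trans hA) hδ.le), ?_⟩
  obtain ⟨M, hM⟩ := bdd_cyl (isCompact_Icc.reProdIm isCompact_Icc) hA hδ h hh.continuousOn
  exact ⟨M, fun v hv => hM v (cyl_mono hs le_rfl hv)⟩

lemma goodV {d : ℕ} {ρ₀ : ℝ} {P : (Fin (d + 2) → ℂ) → ℂ}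
    (hP : AnalyticOnNhd ℂ P (polydisk (d + 2) ρ₀))
    (hPne : ∃ x ∈ polydisk (d + 2) ρ₀, P x ≠ 0) {α β : ℝ} (hαβ : α < β)
    {f : (Fin (d + 2) → ℂ) → ℂ} {x0 x1 y0 y1 y2 : ℝ} (hx : x0 ≤ x1) (hy : y0 ≤ y1) (hy' : y1 ≤ y2)
    (g1 : Good d ρ₀ P α β f x0 x1 y0 y1) (g2 : Good d ρ₀ P α β f x0 x1 y1 y2) :
    Good d ρ₀ P α β f x0 x1 y0 y2 := by
  obtain ⟨δ1, hδ1, s1⟩ := g1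
  obtain ⟨δ2, hδ2, s2⟩ := g2
  obtain ⟨δ, hδ, hd1, hd2⟩ : ∃ δ > 0, δ ≤ δ1 ∧ δ ≤ δ2 :=
    ⟨min δ1 δ2, lt_min hδ1 hδ2, min_le_left _ _, min_le_right _ _⟩
  replace s1 := s1.mono (rect_mono (by linarith) (by linarith) (by linarith) (by linarith) :
    Ioo (x0 - δ) (x1 + δ) ×ℂ Ioo (y0 - δ) (y1 + δ) ⊆ _) hd1
  replace s2 := s2.mono (rect_mono (by linarith) (by linarith) (by linarith) (by linarith) :
    Ioo (x0 - δ) (x1 + δ) ×ℂ Ioo (y1 - δ) (y2 + δ) ⊆ _) hd2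
  refine ⟨δ / 4, by linarith, ?_⟩
  refine (merge_Sol hP hPne hαβ (isOpen_rect _ _ _ _) (isOpen_rect _ _ _ _)
    (V1 := Ioo (x0 - δ / 4) (x1 + δ / 4) ×ℂ Ioo (y0 - δ / 4) (y1 + δ / 4))
    (V2 := Ioo (x0 - δ / 4) (x1 + δ / 4) ×ℂ Ioo (y1 - δ / 4) (y2 + δ / 4))
    (isOpen_rect _ _ _ _) (isOpen_rect _ _ _ _)
    (rect_mono (by linarith) (by linarith) (by linarith) (by linarith))
    (rect_mono (by linarith) (by linarith) (by linarith) (by linarith))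
    (by linarith : δ / 4 ≤ δ) ?_ s1 s2).mono ?_ le_rfl
  · intro h hh
    obtain ⟨hB, hT, hR, hL, aB, aT, aR, aL, hsum⟩ := rect_split hh (x0 - δ / 2) (x1 + δ / 2)
      (y1 - δ / 2) (y1 + δ / 2) (by linarith) (by linarith) (by
        rintro z ⟨⟨h1, h2⟩, ⟨h3, h4⟩⟩
        exact ⟨⟨⟨by linarith, by linarith⟩, ⟨by linarith, by linarith⟩⟩,
          ⟨⟨by linarith, by linarith⟩, ⟨by linarith, by linarith⟩⟩⟩)
    obtain ⟨a1, M1, b1⟩ := bdd_rect (δ' := δ / 4) (x0 - δ / 4) (x1 + δ / 4) (y0 - δ / 4) (y1 + δ / 4)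
      (by rintro z ⟨⟨h1, h2⟩, ⟨h3, h4⟩⟩ (h : z.im = _); linarith) (by linarith) hT aT
    obtain ⟨a2, M2, b2⟩ := bdd_rect (δ' := δ / 4) (x0 - δ / 4) (x1 + δ / 4) (y1 - δ / 4) (y2 + δ / 4)
      (by rintro z ⟨⟨h1, h2⟩, ⟨h3, h4⟩⟩ (h : z.im = _); linarith) (by linarith) hB aB
    obtain ⟨a3, M3, b3⟩ := bdd_rect (δ' := δ / 4) (x0 - δ / 4) (x1 + δ / 4) (y1 - δ / 4) (y2 + δ / 4)
      (by rintro z ⟨⟨h1, h2⟩, ⟨h3, h4⟩⟩ (h : z.re = _); linarith) (by linarith) hR aR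
    obtain ⟨a4, M4, b4⟩ := bdd_rect (δ' := δ / 4) (x0 - δ / 4) (x1 + δ / 4) (y1 - δ / 4) (y2 + δ / 4)
      (by rintro z ⟨⟨h1, h2⟩, ⟨h3, h4⟩⟩ (h : z.re = _); linarith) (by linarith) hL aL
    refine ⟨hT, fun v => -(hB v + hR v + hL v), max M1 (M2 + M3 + M4), a1,
      ((a2.add a3).add a4).neg, fun v hv => (b1 v hv).trans (le_max_left _ _), fun v hv => ?_,
      fun v hv => ?_⟩
    · rw [norm_neg]
      refine (norm_add₃_le.trans ?_).trans (le_max_right _ _)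
      linarith [b2 v hv, b3 v hv, b4 v hv]
    · rw [hsum v ⟨⟨⟨by linarith [hv.1.1.1.1], by linarith [hv.1.1.1.2]⟩,
        ⟨by linarith [hv.1.2.2.1], by linarith [hv.1.1.2.2]⟩⟩,
        fun j hj => (hv.2 j hj).trans (by linarith)⟩]
      ring
  · rintro z ⟨h1, ⟨h3, h4⟩⟩
    rcases le_or_gt z.im y1 with h | h
    · exact Or.inl ⟨h1, ⟨by linarith, by linarith⟩⟩
    · exact Or.inr ⟨h1, ⟨by linarith, by linarith⟩⟩

lemma goodH {d : ℕ} {ρ₀ : ℝ} {P : (Fin (d + 2) → ℂ) → ℂ}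
    (hP : AnalyticOnNhd ℂ P (polydisk (d + 2) ρ₀))
    (hPne : ∃ x ∈ polydisk (d + 2) ρ₀, P x ≠ 0) {α β : ℝ} (hαβ : α < β)
    {f : (Fin (d + 2) → ℂ) → ℂ} {x0 x1 x2 y0 y1 : ℝ} (hx : x0 ≤ x1) (hx' : x1 ≤ x2) (hy : y0 ≤ y1)
    (g1 : Good d ρ₀ P α β f x0 x1 y0 y1) (g2 : Good d ρ₀ P α β f x1 x2 y0 y1) :
    Good d ρ₀ P α β f x0 x2 y0 y1 := by
  obtain ⟨δ1, hδ1, s1⟩ := g1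
  obtain ⟨δ2, hδ2, s2⟩ := g2
  obtain ⟨δ, hδ, hd1, hd2⟩ : ∃ δ > 0, δ ≤ δ1 ∧ δ ≤ δ2 :=
    ⟨min δ1 δ2, lt_min hδ1 hδ2, min_le_left _ _, min_le_right _ _⟩
  replace s1 := s1.mono (rect_mono (by linarith) (by linarith) (by linarith) (by linarith) :
    Ioo (x0 - δ) (x1 + δ) ×ℂ Ioo (y0 - δ) (y1 + δ) ⊆ _) hd1
  replace s2 := s2.mono (rect_mono (by linarith) (by linarith) (by linarith) (by linarith) :
    Ioo (x1 - δ) (x2 + δ) ×ℂ Ioo (y0 - δ) (y1 + δ) ⊆ _) hd2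
  refine ⟨δ / 4, by linarith, ?_⟩
  refine (merge_Sol hP hPne hαβ (isOpen_rect _ _ _ _) (isOpen_rect _ _ _ _)
    (V1 := Ioo (x0 - δ / 4) (x1 + δ / 4) ×ℂ Ioo (y0 - δ / 4) (y1 + δ / 4))
    (V2 := Ioo (x1 - δ / 4) (x2 + δ / 4) ×ℂ Ioo (y0 - δ / 4) (y1 + δ / 4))
    (isOpen_rect _ _ _ _) (isOpen_rect _ _ _ _)
    (rect_mono (by linarith) (by linarith) (by linarith) (by linarith))
    (rect_mono (by linarith) (by linarith) (by linarith) (by linarith))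
    (by linarith : δ / 4 ≤ δ) ?_ s1 s2).mono ?_ le_rfl
  · intro h hh
    obtain ⟨hB, hT, hR, hL, aB, aT, aR, aL, hsum⟩ := rect_split hh (x1 - δ / 2) (x1 + δ / 2)
      (y0 - δ / 2) (y1 + δ / 2) (by linarith) (by linarith) (by
        rintro z ⟨⟨h1, h2⟩, ⟨h3, h4⟩⟩
        exact ⟨⟨⟨by linarith, by linarith⟩, ⟨by linarith, by linarith⟩⟩,
          ⟨⟨by linarith, by linarith⟩, ⟨by linarith, by linarith⟩⟩⟩)
    obtain ⟨a1, M1, b1⟩ := bdd_rect (δ' := δ / 4) (x0 - δ / 4) (x1 + δ / 4) (y0 - δ / 4) (y1 + δ / 4)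
      (by rintro z ⟨⟨h1, h2⟩, ⟨h3, h4⟩⟩ (h : z.re = _); linarith) (by linarith) hR aR
    obtain ⟨a2, M2, b2⟩ := bdd_rect (δ' := δ / 4) (x1 - δ / 4) (x2 + δ / 4) (y0 - δ / 4) (y1 + δ / 4)
      (by rintro z ⟨⟨h1, h2⟩, ⟨h3, h4⟩⟩ (h : z.im = _); linarith) (by linarith) hB aB
    obtain ⟨a3, M3, b3⟩ := bdd_rect (δ' := δ / 4) (x1 - δ / 4) (x2 + δ / 4) (y0 - δ / 4) (y1 + δ / 4)
      (by rintro z ⟨⟨h1, h2⟩, ⟨h3, h4⟩⟩ (h : z.im = _); linarith) (by linarith) hT aT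
    obtain ⟨a4, M4, b4⟩ := bdd_rect (δ' := δ / 4) (x1 - δ / 4) (x2 + δ / 4) (y0 - δ / 4) (y1 + δ / 4)
      (by rintro z ⟨⟨h1, h2⟩, ⟨h3, h4⟩⟩ (h : z.re = _); linarith) (by linarith) hL aL
    refine ⟨hR, fun v => -(hB v + hT v + hL v), max M1 (M2 + M3 + M4), a1,
      ((a2.add a3).add a4).neg, fun v hv => (b1 v hv).trans (le_max_left _ _), fun v hv => ?_,
      fun v hv => ?_⟩
    · rw [norm_neg]
      refine (norm_add₃_le.trans ?_).trans (le_max_right _ _)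
      linarith [b2 v hv, b3 v hv, b4 v hv]
    · rw [hsum v ⟨⟨⟨by linarith [hv.1.2.1.1], by linarith [hv.1.1.1.2]⟩,
        ⟨by linarith [hv.1.1.2.1], by linarith [hv.1.1.2.2]⟩⟩,
        fun j hj => (hv.2 j hj).trans (by linarith)⟩]
      ring
  · rintro z ⟨⟨h3, h4⟩, h1⟩
    rcases le_or_gt z.re x1 with h | h
    · exact Or.inl ⟨⟨by linarith, by linarith⟩, h1⟩
    · exact Or.inr ⟨⟨by linarith, by linarith⟩, h1⟩

lemma Sol_square {d : ℕ} {ρ₀ : ℝ} {P : (Fin (d + 2) → ℂ) → ℂ}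
    (hP : AnalyticOnNhd ℂ P (polydisk (d + 2) ρ₀))
    (hPne : ∃ x ∈ polydisk (d + 2) ρ₀, P x ≠ 0) {α β : ℝ} (hαβ : α < β)
    {f : (Fin (d + 2) → ℂ) → ℂ}
    (hl : ∀ ξ : ℂ, ∃ r > 0, Sol d ρ₀ P α β f (Metric.ball ξ r) r) (R : ℝ) (hR : 0 ≤ R) :
    ∃ δ > 0, Sol d ρ₀ P α β f (Metric.ball 0 R) δ := by
  have h1 : Good d ρ₀ P α β f (-R) R (-R) R := by
    refine interval_ind (p := fun u v => Good d ρ₀ P α β f u v (-R) R) (by linarith) ?_ ?_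
    · intro x y z _ hxy hyz _ g1 g2
      exact goodH hP hPne hαβ hxy hyz (by linarith) g1 g2
    · intro x _
      have := interval_ind (p := fun u v => ∃ ε > 0, ∀ x0 x1, x - ε < x0 → x0 ≤ x1 → x1 < x + ε →
        Good d ρ₀ P α β f x0 x1 u v) (a := -R) (b := R) (by linarith) ?_ ?_
      · obtain ⟨ε, hε, h⟩ := this
        exact ⟨ε, hε, fun u v _ _ => h u v⟩
      · rintro u v w _ huv hvw _ ⟨e1, he1, g1⟩ ⟨e2, he2, g2⟩
        have m1 := min_le_left e1 e2
        have m2 := min_le_right e1 e2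
        refine ⟨min e1 e2, lt_min he1 he2, fun x0 x1 a b c => ?_⟩
        exact goodV hP hPne hαβ b huv hvw (g1 x0 x1 (by linarith) b (by linarith))
          (g2 x0 x1 (by linarith) b (by linarith))
      · intro y _
        obtain ⟨r, hr, hS⟩ := hl ⟨x, y⟩
        refine ⟨r / 4, by linarith, fun u v _ _ a1 a2 a3 => ⟨r / 4, by linarith,
          fun x0 x1 b1 b2 b3 => ⟨r / 4, by linarith, hS.mono ?_ (by linarith)⟩⟩⟩
        rintro z ⟨⟨c1, c2⟩, ⟨c3, c4⟩⟩
        rw [Metric.mem_ball, dist_eq_norm]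
        refine (Complex.norm_le_abs_re_add_abs_im _).trans_lt ?_
        have e1 : |(z - ⟨x, y⟩).re| < r / 2 := by
          rw [Complex.sub_re, abs_lt]; constructor <;> simp only <;> linarith
        have e2 : |(z - ⟨x, y⟩).im| < r / 2 := by
          rw [Complex.sub_im, abs_lt]; constructor <;> simp only <;> linarith
        linarith
  obtain ⟨δ, hδ, hS⟩ := h1
  refine ⟨δ, hδ, hS.mono ?_ le_rfl⟩
  intro z hz
  rw [mem_ball_zero_iff] at hz
  have e1 := abs_lt.1 ((Complex.abs_re_le_norm z).trans_lt hz)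
  have e2 := abs_lt.1 ((Complex.abs_im_le_norm z).trans_lt hz)
  exact ⟨⟨by linarith, by linarith⟩, ⟨by linarith, by linarith⟩⟩

lemma Sol_local {d : ℕ} {ρ₀ : ℝ} {P : (Fin (d + 2) → ℂ) → ℂ}
    (hP : AnalyticOnNhd ℂ P (polydisk (d + 2) ρ₀)) {α β : ℝ} {f : (Fin (d + 2) → ℂ) → ℂ}
    (hf : AnalyticOnNhd ℂ f (PSector (d + 2) P α β ρ₀)) (ξ : ℂ) (r : ℝ)
    (hB : ∀ v ∈ polydisk (d + 2) r, blowUpC d ξ v ∈ polydisk (d + 2) ρ₀)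
    (g : ℕ → (Fin (d + 2) → ℂ) → ℂ) (C : ℕ → ℝ)
    (hg : ∀ n, AnalyticOnNhd ℂ (g n) (polydisk (d + 2) r))
    (he : ∀ n, ∀ v ∈ PSector (d + 2) (fun w => P (blowUpC d ξ w)) α β r,
          blowUpC d ξ v ∈ PSector (d + 2) P α β ρ₀ →
          ‖f (blowUpC d ξ v) - g n v‖ ≤ C n * ‖P (blowUpC d ξ v)‖ ^ n) :
    Sol d ρ₀ P α β f (Metric.ball ξ r) r := by
  have hin : ∀ v ∈ cyl d (Metric.ball ξ r) r, upd v (v 0 - ξ) ∈ polydisk (d + 2) r := by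
    intro v hv j
    by_cases hj : j = 0
    · have := hv.1
      rw [mem_ball_iff_norm] at this
      simpa [upd, hj] using this
    · simpa [upd, hj] using hv.2 j hj
  have hga : ∀ n, AnalyticOnNhd ℂ (fun v => g n (upd v (v 0 - ξ))) (cyl d (Metric.ball ξ r) r) :=
    fun n v hv => (hg n _ (hin v hv)).fun_comp (f := fun v => upd v (v 0 - ξ))
      (analytic_upd analyticAt_id ((analyticAt_proj 0 v).fun_sub analyticAt_const))
  refine ⟨fun v hv => ?_, fun n => ⟨fun v => g n (upd v (v 0 - ξ)), C n, hga n, ?_⟩⟩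
  · rw [← blowUpC_upd ξ]; exact hB _ (hin v hv)
  · have hW : IsOpen (cyl d (Metric.ball ξ r) r ∩ blowUpC d 0 ⁻¹' PSector (d + 2) P α β ρ₀) :=
      (isOpen_cyl Metric.isOpen_ball).inter ((isOpen_PSector hP).preimage (continuous_blowUpC d 0))
    have hfc : ContinuousOn (fun v => f (blowUpC d 0 v))
        (cyl d (Metric.ball ξ r) r ∩ blowUpC d 0 ⁻¹' PSector (d + 2) P α β ρ₀) :=
      hf.continuousOn.comp (continuous_blowUpC d 0).continuousOn fun v hv => hv.2
    have hPc : ContinuousOn (fun v => P (blowUpC d 0 v))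
        (cyl d (Metric.ball ξ r) r ∩ blowUpC d 0 ⁻¹' PSector (d + 2) P α β ρ₀) :=
      hP.continuousOn.comp (continuous_blowUpC d 0).continuousOn fun v hv => (mem_PSector.1 hv.2).1
    have := dens_le hW (dense_ne (d := d) ξ 0)
      (fun v => ‖f (blowUpC d 0 v) - g n (upd v (v 0 - ξ))‖)
      (fun v => C n * ‖P (blowUpC d 0 v)‖ ^ n)
      ((hfc.sub ((hga n).continuousOn.mono inter_subset_left)).norm)
      (continuousOn_const.mul (hPc.norm.pow n)) ?_
    · exact fun v hv hm => this v ⟨hv, hm⟩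
    · rintro v ⟨hv, hm⟩ hne
      have := he n (upd v (v 0 - ξ))
      rw [blowUpC_upd] at this
      refine this ?_ hm
      rw [mem_PSector, blowUpC_upd]
      refine ⟨hin v hv, fun j => ?_, (mem_PSector.1 hm).2.2⟩
      by_cases hj : j = 0
      · simpa [upd, hj, sub_eq_zero] using hne
      · simpa [upd, hj] using ne_of_blow (mem_PSector.1 hm).2.1 j


lemma circ_analytic {E : Type*} [NormedAddCommGroup E] [NormedSpace ℂ E]
    (κ : ℂ × E → ℂ) (R : ℝ) (hR : 0 ≤ R) (p : E)
    (h : ∀ w : ℂ, ‖w‖ = R → AnalyticAt ℂ κ (w, p)) :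
    AnalyticAt ℂ (fun x => ∮ w in C(0, R), κ (w, x)) p := by
  unfold circleIntegral
  simp only [smul_eq_mul]
  refine pa_analytic κ (circleMap 0 R) (deriv (circleMap 0 R)) (continuous_circleMap 0 R) ?_ p 0
    (2 * Real.pi) (by positivity) fun s _ => h _ ?_
  · rw [funext (deriv_circleMap 0 R)]
    exact (continuous_circleMap 0 R).mul continuous_const
  · simpa using abs_of_nonneg hR

def iot {d : ℕ} (v : Fin (d + 2) → ℂ) : Fin (d + 2) → ℂ :=
  fun i => if i = 0 then (v 0)⁻¹ else if i = 1 then v 0 * v 1 else v i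

def sgm {d : ℕ} (τ : ℂ) (w : Fin (d + 2) → ℂ) : Fin (d + 2) → ℂ :=
  fun i => if i = 0 then τ else if i = 1 then w 0 * w 1 else w i

lemma analytic_iot {d : ℕ} {v : Fin (d + 2) → ℂ} (hv : v 0 ≠ 0) : AnalyticAt ℂ iot v := by
  unfold iot
  refine AnalyticAt.pi fun i => ?_
  split_ifs
  · exact (analyticAt_proj _ _).inv hv
  · exact (analyticAt_proj _ _).mul (analyticAt_proj _ _)
  · exact analyticAt_proj _ _

lemma analytic_proj_snd {d : ℕ} (i : Fin (d + 2)) (p : ℂ × (Fin (d + 2) → ℂ)) :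
    AnalyticAt ℂ (fun p : ℂ × (Fin (d + 2) → ℂ) => p.2 i) p :=
  (analyticAt_proj i p.2).fun_comp (f := Prod.snd) analyticAt_snd

lemma analytic_sgm {d : ℕ} (p : ℂ × (Fin (d + 2) → ℂ)) :
    AnalyticAt ℂ (fun p : ℂ × (Fin (d + 2) → ℂ) => sgm p.1 p.2) p := by
  unfold sgm
  refine AnalyticAt.pi fun i => ?_
  split_ifs
  · exact analyticAt_fst
  · exact (analytic_proj_snd _ _).mul (analytic_proj_snd _ _)
  · exact analytic_proj_snd _ _

lemma blowInf_iot {d : ℕ} {v : Fin (d + 2) → ℂ} (hv : v 0 ≠ 0) :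
    blowUpInf d (iot v) = blowUpC d 0 v := by
  ext i
  by_cases h0 : i = 0
  · simp [blowUpInf, blowUpC, iot, h0, hv]
  · by_cases h1 : i = 1
    · simp [blowUpInf, blowUpC, iot, h1]
    · simp [blowUpInf, blowUpC, iot, h0, h1]

lemma sgm_iot {d : ℕ} {v : Fin (d + 2) → ℂ} (hv : v 0 ≠ 0) (τ : ℂ) : sgm τ (iot v) = upd v τ := by
  ext i
  by_cases h0 : i = 0
  · simp [sgm, upd, h0]
  · by_cases h1 : i = 1
    · simp [sgm, upd, iot, h1, hv]
    · simp [sgm, upd, iot, h0, h1]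

lemma ne_of_blowInf {d : ℕ} {v : Fin (d + 2) → ℂ} (h : ∀ j, blowUpInf d v j ≠ 0) (j) :
    v j ≠ 0 := by
  have h0 := h 0
  have hj := h j
  simp [blowUpInf] at h0 hj
  by_cases e0 : j = 0
  · rw [e0]; exact h0.1
  · simpa [e0] using hj

lemma inf_merge {d : ℕ} {ρ₀ : ℝ} {P : (Fin (d + 2) → ℂ) → ℂ}
    (hP : AnalyticOnNhd ℂ P (polydisk (d + 2) ρ₀))
    (hPne : ∃ x ∈ polydisk (d + 2) ρ₀, P x ≠ 0) {α β : ℝ} (hαβ : α < β)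
    {f : (Fin (d + 2) → ℂ) → ℂ}
    (hsq : ∀ R : ℝ, 0 ≤ R → ∃ δ > 0, Sol d ρ₀ P α β f (Metric.ball 0 R) δ)
    (r : ℝ) (hr : 0 < r) (hBI : ∀ v ∈ polydisk (d + 2) r, blowUpInf d v ∈ polydisk (d + 2) ρ₀)
    (g : ℕ → (Fin (d + 2) → ℂ) → ℂ) (C : ℕ → ℝ)
    (hg : ∀ n, AnalyticOnNhd ℂ (g n) (polydisk (d + 2) r))
    (he : ∀ n, ∀ v ∈ PSector (d + 2) (fun w => P (blowUpInf d w)) α β r,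
          blowUpInf d v ∈ PSector (d + 2) P α β ρ₀ →
          ‖f (blowUpInf d v) - g n v‖ ≤ C n * ‖P (blowUpInf d v)‖ ^ n) :
    ∃ a b ε : ℝ, 0 < a ∧ a < b ∧ 0 < ε ∧ ∀ n : ℕ, ∃ (G0 GI : (Fin (d + 2) → ℂ) → ℂ) (C : ℝ),
      AnalyticOnNhd ℂ G0 (cyl d (Metric.ball 0 b) ε) ∧
      AnalyticOnNhd ℂ GI (cyl d (Metric.ball 0 a⁻¹) ε) ∧
      (∀ v ∈ cyl d (Metric.ball 0 b) ε, blowUpC d 0 v ∈ PSector (d + 2) P α β ρ₀ →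
        ‖f (blowUpC d 0 v) - G0 v‖ ≤ C * ‖P (blowUpC d 0 v)‖ ^ n) ∧
      (∀ v ∈ cyl d (Metric.ball 0 a⁻¹) ε, blowUpInf d v ∈ PSector (d + 2) P α β ρ₀ →
        ‖f (blowUpInf d v) - GI v‖ ≤ C * ‖P (blowUpInf d v)‖ ^ n) ∧
      ∀ v, a < ‖v 0‖ → v ∈ cyl d (Metric.ball 0 b) ε → ‖v 0 * v 1‖ < ε → G0 v = GI (iot v) := by
  set s : ℝ := r⁻¹ with hs
  have hs0 : 0 < s := inv_pos.2 hr
  have hsr : s * r = 1 := inv_mul_cancel₀ hr.ne'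
  obtain ⟨δ0, hδ0, S⟩ := hsq (6 * s) (by linarith)
  obtain ⟨δ, hδ, d1, d2, d3⟩ : ∃ δ > 0, δ ≤ δ0 ∧ δ ≤ r ∧ 6 * s * δ ≤ r := by
    refine ⟨min δ0 (min r (r / (6 * s))), by positivity, min_le_left _ _,
      (min_le_right _ _).trans (min_le_left _ _), ?_⟩
    have : min δ0 (min r (r / (6 * s))) ≤ r / (6 * s) :=
      (min_le_right _ _).trans (min_le_right _ _)
    rw [le_div_iff₀ (by positivity)] at this
    linarith
  replace S := S.mono (subset_refl _) d1
  obtain ⟨δ2, hδ2, e1, e2⟩ : ∃ δ2 > 0, δ2 ≤ δ ∧ δ2 ≤ 2 * s * δ :=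
    ⟨min δ (2 * s * δ), by positivity, min_le_left _ _, min_le_right _ _⟩
  have hb0 : cyl d (Metric.ball 0 (4 * s)) (δ2 / 2) ⊆ cyl d (Metric.ball 0 (6 * s)) δ :=
    cyl_mono (Metric.ball_subset_ball (by linarith)) (by linarith)
  have hinv : ∀ k : ℝ, 1 ≤ k → (k * s)⁻¹ ≤ r := by
    intro k hk
    rw [inv_le_iff_one_le_mul₀ (by positivity)]
    nlinarith
  have hbI : ∀ k : ℝ, 1 ≤ k → cyl d (Metric.ball 0 (k * s)⁻¹) δ2 ⊆ polydisk (d + 2) r := by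
    intro k hk v hv j
    by_cases hj : j = 0
    · have := hv.1
      rw [mem_ball_zero_iff] at this
      rw [hj]; linarith [hinv k hk]
    · linarith [hv.2 j hj]
  refine ⟨3 * s, 4 * s, δ2 / 2, by linarith, by linarith, by linarith, fun n => ?_⟩
  obtain ⟨G, C0, aG, bG⟩ := S.2 n
  set U : Set ℂ := {z | s < ‖z‖ ∧ ‖z‖ < 6 * s} with hU
  have hUo : IsOpen U := (isOpen_lt continuous_const continuous_norm).inter
    (isOpen_lt continuous_norm continuous_const)
  have hUb : cyl d U δ ⊆ cyl d (Metric.ball 0 (6 * s)) δ :=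
    cyl_mono (fun z hz => by simpa using hz.2) le_rfl
  have hU0 : ∀ v ∈ cyl d U δ, v 0 ≠ 0 := fun v hv h0 => by
    have := hv.1.1; rw [h0, norm_zero] at this; linarith
  have hUi : ∀ v ∈ cyl d U δ, iot v ∈ polydisk (d + 2) r := by
    intro v hv j
    by_cases h0 : j = 0
    · simp only [iot, h0, if_true, norm_inv]
      have := hv.1.1
      rw [inv_lt_comm₀ (by linarith) hr]
      exact this
    · by_cases h1 : j = 1
      · simp only [iot, h1, if_true]
        rw [if_neg (by simp), norm_mul]
        have a1 := hv.1.2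
        have a2 := hv.2 1 (by simp)
        calc ‖v 0‖ * ‖v 1‖ ≤ 6 * s * ‖v 1‖ := by gcongr
          _ < 6 * s * δ := by gcongr
          _ ≤ r := d3
      · simp only [iot, h0, h1, if_false]
        linarith [hv.2 j h0]
  obtain ⟨h, ah, hh⟩ := diff_div hP hPne hαβ f (cyl d U δ) (isOpen_cyl hUo)
    (fun v hv => S.1 v (hUb hv)) G (fun v => g n (iot v)) n C0 (C n) (aG.mono hUb)
    (fun v hv => (hg n _ (hUi v hv)).fun_comp (analytic_iot (hU0 v hv)))
    (fun v hv => bG v (hUb hv)) (by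
      intro v hv hm
      rw [← blowInf_iot (hU0 v hv)] at hm ⊢
      exact he n _ (mem_PSector.2 ⟨hUi v hv, ne_of_blowInf (mem_PSector.1 hm).2.1,
        (mem_PSector.1 hm).2.2⟩) hm)
  have hc : (2 * Real.pi * I : ℂ) ≠ 0 := by simp [Real.pi_ne_zero]
  set h1 : (Fin (d + 2) → ℂ) → ℂ := fun v =>
    (2 * Real.pi * I)⁻¹ * ∮ w in C(0, 5 * s), h (upd v w) * (w - v 0)⁻¹ with hh1
  set h2 : (Fin (d + 2) → ℂ) → ℂ := fun w =>
    (2 * Real.pi * I)⁻¹ * ∮ τ in C(0, 2 * s), h (sgm τ w) * (w 0 * (τ * w 0 - 1)⁻¹) with hh2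
  have a1 : AnalyticOnNhd ℂ h1 (cyl d (Metric.ball 0 (5 * s)) δ) := by
    intro v hv
    refine analyticAt_const.mul (circ_analytic (fun p : ℂ × (Fin (d + 2) → ℂ) =>
      h (upd p.2 p.1) * (p.1 - p.2 0)⁻¹) (5 * s) (by linarith) v fun w hw => ?_)
    have h1 : AnalyticAt ℂ h (upd v w) := ah _ ⟨by simp [upd, hU, hw]; constructor <;> linarith,
      fun j hj => by simpa [upd, hj] using hv.2 j hj⟩
    refine AnalyticAt.mul (AnalyticAt.fun_comp (g := h) h1
      (analytic_upd analyticAt_snd analyticAt_fst))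
      (AnalyticAt.inv (analyticAt_fst.fun_sub (analytic_proj_snd _ _)) ?_)
    refine sub_ne_zero.2 fun h' => ?_
    have := hv.1
    simp only at h'
    rw [mem_ball_zero_iff, ← h', hw] at this
    exact lt_irrefl _ this
  have a2 : AnalyticOnNhd ℂ h2 (cyl d (Metric.ball 0 (2 * s)⁻¹) δ2) := by
    intro v hv
    have hv0 : ‖v 0‖ < (2 * s)⁻¹ := by simpa using hv.1
    refine analyticAt_const.mul (circ_analytic (fun p : ℂ × (Fin (d + 2) → ℂ) =>
      h (sgm p.1 p.2) * (p.2 0 * (p.1 * p.2 0 - 1)⁻¹)) (2 * s) (by linarith) v fun w hw => ?_)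
    have h1 : AnalyticAt ℂ h (sgm w v) := by
      refine ah _ ⟨by simp [sgm, hU, hw]; constructor <;> linarith, fun j hj => ?_⟩
      by_cases h1 : j = 1
      · simp only [sgm, h1, if_true]
        rw [if_neg (by simp), norm_mul]
        have a2 := hv.2 1 (by simp)
        have : (2 * s)⁻¹ * (2 * s * δ) = δ := by field_simp
        calc ‖v 0‖ * ‖v 1‖ ≤ (2 * s)⁻¹ * ‖v 1‖ := by gcongr
          _ < (2 * s)⁻¹ * (2 * s * δ) := by gcongr; linarith
          _ = δ := this
      · simp only [sgm, hj, h1, if_false]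
        linarith [hv.2 j hj]
    refine AnalyticAt.mul (AnalyticAt.fun_comp (g := h) h1 (analytic_sgm (w, v)))
      ((analytic_proj_snd _ _).mul
      (AnalyticAt.inv ((analyticAt_fst.fun_mul (analytic_proj_snd _ _)).fun_sub analyticAt_const) ?_))
    refine sub_ne_zero.2 fun h' => ?_
    have h3 : ‖w‖ * ‖v 0‖ = 1 := by rw [← norm_mul]; simp only at h'; rw [h', norm_one]
    rw [hw] at h3
    have : 2 * s * ‖v 0‖ < 2 * s * (2 * s)⁻¹ := by gcongr
    rw [h3, mul_inv_cancel₀ (by positivity)] at this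
    exact lt_irrefl _ this
  obtain ⟨M1, b1⟩ := bdd_cyl (δ' := δ2 / 2) (isCompact_closedBall (0 : ℂ) (4 * s))
    (Metric.closedBall_subset_ball (by linarith)) (by linarith) h1 a1.continuousOn
  have hlt : (3 * s)⁻¹ < (2 * s)⁻¹ := by gcongr; linarith
  obtain ⟨M2, b2⟩ := bdd_cyl (δ' := δ2 / 2) (isCompact_closedBall (0 : ℂ) (3 * s)⁻¹)
    (Metric.closedBall_subset_ball hlt) (by linarith) h2 a2.continuousOn
  have hcI : cyl d (Metric.ball 0 (3 * s)⁻¹) (δ2 / 2) ⊆ polydisk (d + 2) r :=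
    (cyl_mono (subset_refl _) (by linarith)).trans (hbI 3 (by norm_num))
  refine ⟨fun v => G v - P (blowUpC d 0 v) ^ n * h1 v,
    fun v => g n v - P (blowUpInf d v) ^ n * h2 v, max (C0 + M1) (C n + M2), ?_, ?_, ?_, ?_, ?_⟩
  · intro v hv
    exact (aG v (hb0 hv)).sub ((((hP _ (S.1 v (hb0 hv))).fun_comp
      (analytic_blowUpC d 0 v)).pow n).mul (a1 v (cyl_mono (Metric.ball_subset_ball (by linarith))
      (by linarith) hv)))
  · intro v hv
    exact (hg n v (hcI hv)).sub ((((hP _ (hBI v (hcI hv))).fun_comp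
      (analytic_blowUpInf d v)).pow n).mul (a2 v (cyl_mono (Metric.ball_subset_ball hlt.le)
      (by linarith) hv)))
  · intro v hv hm
    refine (corr_bound (bG v (hb0 hv) hm)
      (b1 v (cyl_mono Metric.ball_subset_closedBall le_rfl hv))).trans ?_
    gcongr
    exact le_max_left _ _
  · intro v hv hm
    refine (corr_bound (he n v (mem_PSector.2 ⟨hcI hv, ne_of_blowInf (mem_PSector.1 hm).2.1,
        (mem_PSector.1 hm).2.2⟩) hm)
      (b2 v (cyl_mono Metric.ball_subset_closedBall le_rfl hv))).trans ?_
    gcongr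
    exact le_max_right _ _
  · intro v hv3 hv hv1
    have hv4 : ‖v 0‖ < 4 * s := by simpa using hv.1
    have hvU : v ∈ cyl d U δ := ⟨⟨by linarith, by linarith⟩, fun j hj => by linarith [hv.2 j hj]⟩
    have hv0 := hU0 v hvU
    have e := hh v hvU
    have hac := annulus_cauchy (2 * s) (5 * s) (by linarith) (v 0) (by linarith) (by linarith)
      (fun w => h (upd v w)) U hUo (fun z hz1 hz2 => ⟨by linarith, by linarith⟩) (by
        intro w hw
        have h1 : AnalyticAt ℂ h (upd v w) := ah _ ⟨by simpa [upd] using hw, fun j hj => by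
          simpa [upd, hj] using hvU.2 j hj⟩
        exact (h1.fun_comp (analytic_upd analyticAt_const
          analyticAt_id)).differentiableAt.differentiableWithinAt)
    have hu : upd v (v 0) = v := by ext j; by_cases hj : j = 0 <;> simp [upd, hj]
    simp only [hu] at hac
    have hsp : h v = h1 v - h2 (iot v) := by
      have e3 : h2 (iot v) = (2 * Real.pi * I)⁻¹ * ∮ w in C(0, 2 * s), h (upd v w) * (w - v 0)⁻¹ := by
        simp only [hh2]
        congr 1
        refine circleIntegral.integral_congr (by linarith) fun w hw => ?_
        have hw' : ‖w‖ = 2 * s := by simpa using hw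
        have hwv : w - v 0 ≠ 0 := sub_ne_zero.2 fun h' => by rw [h'] at hw'; linarith
        simp only [sgm_iot hv0]
        congr 1
        simp only [iot, if_true]
        rw [← mul_inv, mul_sub, mul_one, mul_comm w, mul_inv_cancel_left₀ hv0]
      rw [e3, hh1, ← mul_sub, hac, ← mul_assoc, inv_mul_cancel₀ hc, one_mul]
    simp only [blowInf_iot hv0]
    rw [hsp] at e
    linear_combination e


def jmap {d : ℕ} (w : ℂ) (x : Fin (d + 2) → ℂ) : Fin (d + 2) → ℂ :=
  fun i => if i = 0 then x 1 * w⁻¹ else if i = 1 then w else x i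

def lmap {d : ℕ} (w : ℂ) (x : Fin (d + 2) → ℂ) : Fin (d + 2) → ℂ :=
  fun i => if i = 0 then w * (x 1)⁻¹ else x i

lemma analytic_jmap {d : ℕ} (p : ℂ × (Fin (d + 2) → ℂ)) (hp : p.1 ≠ 0) :
    AnalyticAt ℂ (fun p : ℂ × (Fin (d + 2) → ℂ) => jmap p.1 p.2) p := by
  unfold jmap
  refine AnalyticAt.pi fun i => ?_
  split_ifs
  · exact (analytic_proj_snd _ _).mul (analyticAt_fst.inv hp)
  · exact analyticAt_fst
  · exact analytic_proj_snd _ _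

lemma analytic_lmap {d : ℕ} (w : ℂ) (x : Fin (d + 2) → ℂ) :
    AnalyticAt ℂ (fun w => lmap w x) w := by
  unfold lmap
  refine AnalyticAt.pi fun i => ?_
  split_ifs
  · exact analyticAt_id.mul analyticAt_const
  · exact analyticAt_const

lemma jmap_mem {d : ℕ} {b ε : ℝ} {w : ℂ} {x : Fin (d + 2) → ℂ} (hw : w ≠ 0) (hwε : ‖w‖ < ε)
    (hx : ∀ j, ‖x j‖ < ε) (h1 : ‖x 1‖ < b * ‖w‖) : jmap w x ∈ cyl d (Metric.ball 0 b) ε := by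
  refine ⟨?_, fun j hj => ?_⟩
  · simp only [jmap, if_true]
    rw [mem_ball_zero_iff, norm_mul, norm_inv, ← div_eq_mul_inv, div_lt_iff₀ (norm_pos_iff.2 hw)]
    exact h1
  · by_cases h : j = 1
    · simpa [jmap, h] using hwε
    · simpa [jmap, hj, h] using hx j

lemma lmap_mem {d : ℕ} {a ε : ℝ} {w : ℂ} {x : Fin (d + 2) → ℂ} (ha : 0 < a) (hx1 : x 1 ≠ 0)
    (hx : ∀ j, ‖x j‖ < ε) (h1 : a * ‖w‖ < ‖x 1‖) : lmap w x ∈ cyl d (Metric.ball 0 a⁻¹) ε := by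
  refine ⟨?_, fun j hj => ?_⟩
  · simp only [lmap, if_true]
    rw [mem_ball_zero_iff, norm_mul, norm_inv, ← div_eq_mul_inv, div_lt_iff₀ (norm_pos_iff.2 hx1),
      inv_mul_eq_div, lt_div_iff₀ ha]
    linarith
  · simpa [lmap, hj] using hx j

lemma iot_jmap {d : ℕ} {w : ℂ} {x : Fin (d + 2) → ℂ} (hw : w ≠ 0) :
    iot (jmap w x) = lmap w x := by
  ext i
  by_cases h0 : i = 0
  · simp [iot, jmap, lmap, h0]
  · by_cases h1 : i = 1
    · simp [iot, jmap, lmap, h1, hw]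
    · simp [iot, jmap, lmap, h0, h1]

lemma blow_jmap {d : ℕ} {x : Fin (d + 2) → ℂ} (hx : x 0 ≠ 0) :
    blowUpC d 0 (jmap (x 0) x) = x := by
  ext i
  by_cases h0 : i = 0
  · simp [blowUpC, jmap, h0]
  · by_cases h1 : i = 1
    · simp [blowUpC, jmap, h1, hx]
    · simp [blowUpC, jmap, h0, h1]

lemma blow_lmap {d : ℕ} {x : Fin (d + 2) → ℂ} (hx : x 1 ≠ 0) :
    blowUpInf d (lmap (x 0) x) = x := by
  ext i
  by_cases h0 : i = 0
  · simp [blowUpInf, lmap, h0, hx]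
  · simp [blowUpInf, lmap, h0]

open Filter Topology in
lemma blow_down {d : ℕ} {a b ε ρ1 ρ2 : ℝ} (ha : 0 < a) (hab : a < b) (hρ1 : 0 < ρ1) (h1ε : ρ1 < ε)
    (h21 : ρ2 ≤ ρ1) (h2b : ρ2 ≤ b * ρ1) (G0 GI : (Fin (d + 2) → ℂ) → ℂ)
    (a0 : AnalyticOnNhd ℂ G0 (cyl d (Metric.ball 0 b) ε))
    (aI : AnalyticOnNhd ℂ GI (cyl d (Metric.ball 0 a⁻¹) ε))
    (hag : ∀ v, a < ‖v 0‖ → v ∈ cyl d (Metric.ball 0 b) ε → ‖v 0 * v 1‖ < ε → G0 v = GI (iot v)) :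
    ∃ F : (Fin (d + 2) → ℂ) → ℂ, AnalyticOnNhd ℂ F (polydisk (d + 2) ρ2) ∧
      ∀ x ∈ polydisk (d + 2) ρ2, (∀ j, x j ≠ 0) →
        (‖x 1‖ < b * ‖x 0‖ ∧ F x = G0 (jmap (x 0) x)) ∨
        (a * ‖x 0‖ < ‖x 1‖ ∧ F x = GI (lmap (x 0) x)) := by
  have hb : 0 < b := ha.trans hab
  refine ⟨fun x => (2 * Real.pi * I)⁻¹ * ∮ w in C(0, ρ1), (w - x 0)⁻¹ * G0 (jmap w x), ?_, ?_⟩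
  · intro x hx
    refine analyticAt_const.mul (circ_analytic (fun p : ℂ × (Fin (d + 2) → ℂ) =>
      (p.1 - p.2 0)⁻¹ * G0 (jmap p.1 p.2)) ρ1 hρ1.le x fun w hw => ?_)
    have hw0 : w ≠ 0 := by rintro rfl; simp at hw; linarith
    refine AnalyticAt.mul (AnalyticAt.inv (analyticAt_fst.fun_sub (analytic_proj_snd _ _)) ?_)
      (AnalyticAt.fun_comp (g := G0) (a0 _ ?_) (analytic_jmap (w, x) hw0))
    · refine sub_ne_zero.2 fun h' => ?_
      simp only at h'
      have := hx 0
      rw [← h', hw] at this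
      linarith
    · exact jmap_mem hw0 (by linarith) (fun j => by linarith [hx j]) (by
        rw [hw]; linarith [hx 1])
  · intro x hx hne
    have hxε : ∀ j, ‖x j‖ < ε := fun j => by linarith [hx j]
    have hx1 : 0 < ‖x 1‖ := norm_pos_iff.2 (hne 1)
    set Φ : ℂ → ℂ := fun w => if ‖x 1‖ < b * ‖w‖ then G0 (jmap w x) else GI (lmap w x) with hΦ
    have hnz : ∀ w : ℂ, ‖x 1‖ < b * ‖w‖ → w ≠ 0 := by
      rintro w hw rfl; simp at hw; linarith
    have hda : ∀ w : ℂ, ‖w‖ ≤ ρ1 → DifferentiableAt ℂ Φ w := by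
      intro w hw
      by_cases hc : ‖x 1‖ < b * ‖w‖
      · have h0 := hnz w hc
        have hA : AnalyticAt ℂ (fun w => G0 (jmap w x)) w :=
          (a0 _ (jmap_mem h0 (by linarith) hxε hc)).fun_comp (f := fun w => jmap w x)
            ((analytic_jmap (w, x) h0).fun_comp (f := fun w => (w, x))
              (analyticAt_id.prod analyticAt_const))
        refine hA.differentiableAt.congr_of_eventuallyEq ?_
        have : ∀ᶠ w' in 𝓝 w, ‖x 1‖ < b * ‖w'‖ :=
          (isOpen_lt continuous_const (by fun_prop : Continuous fun w : ℂ => b * ‖w‖)).mem_nhds hc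
        filter_upwards [this] with w' hw'
        simp only [hΦ, if_pos hw']
      · have hc' : a * ‖w‖ < ‖x 1‖ := by
          push Not at hc
          rcases eq_or_lt_of_le (norm_nonneg w) with h | h
          · rw [← h]; simpa using hx1
          · nlinarith
        have hA : AnalyticAt ℂ (fun w => GI (lmap w x)) w :=
          (aI _ (lmap_mem ha (hne 1) hxε hc')).fun_comp (f := fun w => lmap w x) (analytic_lmap w x)
        refine hA.differentiableAt.congr_of_eventuallyEq ?_
        have e1 : ∀ᶠ w' in 𝓝 w, a * ‖w'‖ < ‖x 1‖ :=
          (isOpen_lt (by fun_prop : Continuous fun w : ℂ => a * ‖w‖) continuous_const).mem_nhds hc'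
        have e2 : ∀ᶠ w' in 𝓝 w, ‖w'‖ < ε :=
          (isOpen_lt continuous_norm continuous_const).mem_nhds (by
            show ‖w‖ < ε
            linarith)
        filter_upwards [e1, e2] with w' hw' hw2
        simp only [hΦ]
        split_ifs with hc2
        · have h0 := hnz w' hc2
          rw [← iot_jmap h0]
          refine hag _ ?_ (jmap_mem h0 hw2 hxε hc2) ?_
          · simp only [jmap, if_true]
            rw [norm_mul, norm_inv, ← div_eq_mul_inv, lt_div_iff₀ (norm_pos_iff.2 h0)]
            exact hw'
          · have : jmap w' x 0 * jmap w' x 1 = x 1 := by simp [jmap, h0]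
            rw [this]; exact hxε 1
        · rfl
    have hcau := Complex.two_pi_I_inv_smul_circleIntegral_sub_inv_smul_of_differentiable_on_off_countable
      (c := 0) (R := ρ1) (w := x 0) (f := Φ) countable_empty (by
        rw [mem_ball_zero_iff]; linarith [hx 0])
      (fun w hw => (hda w (by simpa using hw)).continuousAt.continuousWithinAt)
      (fun w hw => hda w (by have := hw.1; rw [mem_ball_zero_iff] at this; exact this.le))
    have hF : (2 * Real.pi * I)⁻¹ * (∮ w in C(0, ρ1), (w - x 0)⁻¹ * G0 (jmap w x)) = Φ (x 0) := by
      rw [← hcau]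
      simp only [smul_eq_mul]
      congr 1
      refine circleIntegral.integral_congr hρ1.le fun w hw => ?_
      have hw' : ‖w‖ = ρ1 := by simpa using hw
      simp only [hΦ]
      rw [if_pos (by rw [hw']; linarith [hx 1])]
    beta_reduce
    rw [hF]
    by_cases hc : ‖x 1‖ < b * ‖x 0‖
    · left; exact ⟨hc, by simp only [hΦ, if_pos hc]⟩
    · right
      refine ⟨?_, by simp only [hΦ, if_neg hc]⟩
      have := norm_pos_iff.2 (hne 0)
      nlinarith

/-- **Stability of `P`-asymptotic expansions under blow-down** (Proposition 6.1).
If `f ∘ b_ξ` admits a `(P∘b_ξ)`-asymptotic expansion in the estimate sense for every chart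
`ξ ∈ ℂ ∪ {∞}` of the blow-up of codimension-two center, then `f` admits a `P`-asymptotic
expansion in the estimate sense. -/
theorem P_asymptotics_stable_under_blow_down
    (d : ℕ) (ρ₀ : ℝ) (hρ₀ : 0 < ρ₀)
    (P : (Fin (d + 2) → ℂ) → ℂ) (hP : AnalyticOnNhd ℂ P (polydisk (d + 2) ρ₀))
    (hP0 : P 0 = 0) (hPne : ∃ x ∈ polydisk (d + 2) ρ₀, P x ≠ 0)
    (α β : ℝ) (hαβ : α < β) (h2π : β ≤ α + 2 * Real.pi)
    (f : (Fin (d + 2) → ℂ) → ℂ)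
    (hf : AnalyticOnNhd ℂ f (PSector (d + 2) P α β ρ₀))
    (hC : ∀ ξ : ℂ, ∃ rξ > 0,
      (∀ v ∈ polydisk (d + 2) rξ, blowUpC d ξ v ∈ polydisk (d + 2) ρ₀) ∧
      ∃ g : ℕ → (Fin (d + 2) → ℂ) → ℂ, ∃ C : ℕ → ℝ,
        (∀ n, AnalyticOnNhd ℂ (g n) (polydisk (d + 2) rξ)) ∧
        (∀ n, ∃ M, ∀ v ∈ polydisk (d + 2) rξ, ‖g n v‖ ≤ M) ∧
        (∀ n, 0 < C n) ∧
        (∀ n, ∀ v ∈ PSector (d + 2) (fun w => P (blowUpC d ξ w)) α β rξ,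
          blowUpC d ξ v ∈ PSector (d + 2) P α β ρ₀ →
          ‖f (blowUpC d ξ v) - g n v‖ ≤
            C n * ‖P (blowUpC d ξ v)‖ ^ n))
    (hInf : ∃ rI > 0,
      (∀ v ∈ polydisk (d + 2) rI, blowUpInf d v ∈ polydisk (d + 2) ρ₀) ∧
      ∃ g : ℕ → (Fin (d + 2) → ℂ) → ℂ, ∃ C : ℕ → ℝ,
        (∀ n, AnalyticOnNhd ℂ (g n) (polydisk (d + 2) rI)) ∧
        (∀ n, ∃ M, ∀ v ∈ polydisk (d + 2) rI, ‖g n v‖ ≤ M) ∧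
        (∀ n, 0 < C n) ∧
        (∀ n, ∀ v ∈ PSector (d + 2) (fun w => P (blowUpInf d w)) α β rI,
          blowUpInf d v ∈ PSector (d + 2) P α β ρ₀ →
          ‖f (blowUpInf d v) - g n v‖ ≤
            C n * ‖P (blowUpInf d v)‖ ^ n)) :
    ∃ ρ > 0, ρ ≤ ρ₀ ∧
      ∃ fn : ℕ → (Fin (d + 2) → ℂ) → ℂ, ∃ B : ℕ → ℝ,
        (∀ n, AnalyticOnNhd ℂ (fn n) (polydisk (d + 2) ρ)) ∧
        (∀ n, ∃ M, ∀ x ∈ polydisk (d + 2) ρ, ‖fn n x‖ ≤ M) ∧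
        (∀ n, 0 < B n) ∧
        (∀ n, ∀ x ∈ PSector (d + 2) P α β ρ,
          ‖f x - fn n x‖ ≤ B n * ‖P x‖ ^ n) := by
  have hl : ∀ ξ : ℂ, ∃ r > 0, Sol d ρ₀ P α β f (Metric.ball ξ r) r := by
    intro ξ
    obtain ⟨r, hr, hB, g, C, hg, -, -, he⟩ := hC ξ
    exact ⟨r, hr, Sol_local hP hf ξ r hB g C hg he⟩
  obtain ⟨r, hr, hBI, g, C, hg, -, -, he⟩ := hInf
  obtain ⟨a, b, ε, ha, hab, hε, hmain⟩ := inf_merge hP hPne hαβ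
    (fun R hR => Sol_square hP hPne hαβ hl R hR) r hr hBI g C hg he
  have hb : 0 < b := ha.trans hab
  obtain ⟨ρ2, hρ2, h21, h2b⟩ : ∃ ρ2 > 0, ρ2 ≤ ε / 2 ∧ ρ2 ≤ b * (ε / 2) :=
    ⟨min (ε / 2) (b * (ε / 2)), by positivity, min_le_left _ _, min_le_right _ _⟩
  choose G0 GI K a0 aI b0 bI hag using hmain
  have hbd := fun n => blow_down ha hab (by linarith : 0 < ε / 2) (by linarith) h21 h2b (G0 n) (GI n)
    (a0 n) (aI n) (hag n)
  choose F aF hF using hbd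
  have hm1 := min_le_left (ρ2 / 2) ρ₀
  have hm2 := min_le_right (ρ2 / 2) ρ₀
  refine ⟨min (ρ2 / 2) ρ₀, by positivity, hm2, F, fun n => |K n| + 1, ?_, ?_, ?_, ?_⟩
  · exact fun n => (aF n).mono fun x hx j => by linarith [hx j]
  · intro n
    obtain ⟨M, hM⟩ := bdd_cyl (d := d) (δ := ρ2) (δ' := ρ2 / 2)
      (isCompact_closedBall (0 : ℂ) (ρ2 / 2))
      (Metric.closedBall_subset_ball (by linarith : ρ2 / 2 < ρ2)) (by linarith) (F n)
      ((aF n).continuousOn.mono (by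
        intro x hx j
        by_cases hj : j = 0
        · rw [hj]; simpa using hx.1
        · exact hx.2 j hj))
    exact ⟨M, fun x hx => hM x ⟨by simpa using ((hx 0).trans_le hm1).le,
      fun j _ => (hx j).trans_le hm1⟩⟩
  · intro n; positivity
  · intro n x hx
    obtain ⟨hxp, hne, hsec⟩ := mem_PSector.1 hx
    have hxS : x ∈ PSector (d + 2) P α β ρ₀ :=
      mem_PSector.2 ⟨fun j => (hxp j).trans_le hm2, hne, hsec⟩
    have hx2 : x ∈ polydisk (d + 2) ρ2 := fun j => by linarith [hxp j]
    have hxε : ∀ j, ‖x j‖ < ε := fun j => by linarith [hx2 j]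
    have hK : K n * ‖P x‖ ^ n ≤ (|K n| + 1) * ‖P x‖ ^ n := by
      gcongr
      linarith [le_abs_self (K n)]
    rcases hF n x hx2 hne with ⟨h1, h2⟩ | ⟨h1, h2⟩
    · have := b0 n _ (jmap_mem (hne 0) (hxε 0) hxε h1)
      rw [blow_jmap (hne 0)] at this
      rw [h2]
      exact (this hxS).trans hK
    · have := bI n _ (lmap_mem ha (hne 1) hxε h1)
      rw [blow_lmap (hne 1)] at this
      rw [h2]
      exact (this hxS).trans hK
end
end

section
/- Stability of P-asymptotic expansions under ramification (Proposition 6.11): Let d ≥ 1, k ≥ 2 an integer, P holomorphic on D(0;ρ_0) ⊆ ℂ^d with P(0) = 0 and P not identically zero, Π = Π_P(α,β;ρ_0), and f : Π → ℂ holomorphic. Assume there exist r̃ > 0 with r_k(D(0;r̃)) ⊆ D(0;ρ_0), a sequence (g_n) of bounded holomorphic functions on D(0;r̃), and constants C_n > 0 such that |f(r_k(v)) − g_n(v)| ≤ C_n·|P(r_k(v))|^n for every n ∈ ℕ and every v in the (P∘r_k)-sector Π_{P∘r_k}(α,β;r̃). Then there exist ρ > 0 and a sequence (f_n) of bounded holomorphic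 functions on D(0;ρ) such that |f(x) − f_n(x)| ≤ C_n·|P(x)|^n for every n ∈ ℕ and every x ∈ Π_P(α,β;ρ); that is, f admits a P-asymptotic expansion in the estimate sense. -/
open Set Complex

noncomputable section

/-- Ramification `r_k(v) = (v₁^k, v₂, …, v_d)` (in dimension `d+1`). -/
def ramification (d k : ℕ) (v : Fin (d + 1) → ℂ) : Fin (d + 1) → ℂ :=
  fun i => if i = 0 then v 0 ^ k else v i

section lifting
variable {K E : Type*} [TopologicalSpace K] [CompactSpace K]
  [NormedAddCommGroup E] [NormedSpace ℂ E]

def liftSeries (p : FormalMultilinearSeries ℂ E ℂ) :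
    FormalMultilinearSeries ℂ C(K, E) C(K, ℂ) := fun n =>
  MultilinearMap.mkContinuous
    { toFun := fun φ => ⟨fun t => p n (fun i => φ i t), by fun_prop⟩
      map_update_add' := by
        intro _ φ i x y
        ext t
        have h : ∀ z : C(K, E), (fun j => (Function.update φ i z j) t) =
            Function.update (fun j => φ j t) i (z t) := by
          intro z; ext j; by_cases hj : j = i
          · subst hj; simp
          · simp [hj]
        simp [h]
      map_update_smul' := by
        intro _ φ i c x
        ext t
        have h : ∀ z : C(K, E), (fun j => (Function.update φ i z j) t) =
            Function.update (fun j => φ j t) i (z t) := by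
          intro z; ext j; by_cases hj : j = i
          · subst hj; simp
          · simp [hj]
        simp [h] } ‖p n‖ (by
    intro φ
    refine (ContinuousMap.norm_le _ (by positivity)).2 fun t => ?_
    refine ((p n).le_opNorm _).trans ?_
    gcongr with i
    exact (φ i).norm_coe_le_norm t)

lemma liftSeries_apply (p : FormalMultilinearSeries ℂ E ℂ) (n : ℕ) (φ : Fin n → C(K, E)) (t : K) :
    liftSeries p n φ t = p n (fun i => φ i t) := rfl

lemma liftSeries_radius (p : FormalMultilinearSeries ℂ E ℂ) :
    p.radius ≤ (liftSeries (K := K) p).radius :=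
  FormalMultilinearSeries.radius_le_of_le fun _ =>
    MultilinearMap.mkContinuous_norm_le _ (norm_nonneg _) _

lemma lift_analytic {H : E → ℂ} {p : FormalMultilinearSeries ℂ E ℂ} {x : E} {R : ENNReal}
    (h : HasFPowerSeriesOnBall H p x R) :
    ∃ Q : C(K, E) → C(K, ℂ), AnalyticOnNhd ℂ Q (Metric.eball 0 R) ∧
      ∀ φ ∈ Metric.eball (0 : C(K, E)) R, ∀ t, Q φ t = H (x + φ t) := by
  have hr : R ≤ (liftSeries (K := K) p).radius := h.r_le.trans (liftSeries_radius p)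
  have hQ := ((liftSeries (K := K) p).hasFPowerSeriesOnBall (h.r_pos.trans_le hr)).mono h.r_pos hr
  refine ⟨_, hQ.analyticOnNhd, fun φ hφ t => ?_⟩
  have h1 := hQ.hasSum hφ
  have h2 := (ContinuousMap.evalCLM ℂ t).hasSum h1
  have h3 : φ t ∈ Metric.eball (0 : E) R := by
    rw [Metric.mem_eball, edist_zero_right] at hφ ⊢
    refine lt_of_le_of_lt ?_ hφ
    rw [enorm_le_iff_norm_le]
    exact φ.norm_coe_le_norm t
  have h4 := h.hasSum h3
  have := h2.unique h4
  simpa using this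

end lifting

lemma local_analytic {E : Type*} [NormedAddCommGroup E] [NormedSpace ℂ E]
    (H : ℂ × E → ℂ) (γ : ℝ → ℂ) (hγ : Continuous γ) (a : E) (t₀ : ℝ)
    (hH : AnalyticAt ℂ H (γ t₀, a)) :
    ∃ δ > 0, ∀ c d, c ≤ d → Icc c d ⊆ Metric.ball t₀ δ →
      AnalyticAt ℂ (fun x => ∫ t in c..d, H (γ t, x)) a := by
  obtain ⟨p, R, hp⟩ := hH
  obtain ⟨r, hr0, hrR⟩ := ENNReal.lt_iff_exists_nnreal_btwn.1 hp.r_pos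
  have hr0' : 0 < (r : ℝ) := by exact_mod_cast hr0
  have hev : ∀ᶠ t in nhds t₀, ‖γ t - γ t₀‖ < r := by
    have hc : ContinuousAt (fun t => ‖γ t - γ t₀‖) t₀ := by fun_prop
    exact hc.eventually_lt_const (by simpa using hr0')
  obtain ⟨δ, hδ, hball⟩ := Metric.eventually_nhds_iff_ball.1 hev
  refine ⟨δ, hδ, fun c d hcd hsub => ?_⟩
  obtain ⟨Q, hQA, hQ⟩ := lift_analytic (K := Icc c d) hp
  let Φ : E → C(Icc c d, ℂ × E) := fun x => ⟨fun t => (γ t - γ t₀, x - a), by fun_prop⟩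
  let Λ : C(Icc c d, ℂ) →L[ℂ] ℂ := LinearMap.mkContinuous
    { toFun := fun φ => ∫ t in c..d, IccExtend hcd φ t
      map_add' := fun φ ψ => intervalIntegral.integral_add
        ((φ.continuous.Icc_extend' (h := hcd)).intervalIntegrable _ _)
        ((ψ.continuous.Icc_extend' (h := hcd)).intervalIntegrable _ _)
      map_smul' := fun m φ => intervalIntegral.integral_const_mul m _ }
    (|d - c|) (fun φ => by
      rw [mul_comm]
      exact intervalIntegral.norm_integral_le_of_norm_le_const
        (fun t _ => φ.norm_coe_le_norm _))
  have hΦA : AnalyticAt ℂ Φ a := by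
    let L : E →L[ℂ] C(Icc c d, ℂ × E) := LinearMap.mkContinuous
      { toFun := fun x => ContinuousMap.const _ (0, x)
        map_add' := fun x y => by ext <;> simp
        map_smul' := fun m x => by ext <;> simp } 1 (fun x => by
          refine (ContinuousMap.norm_le _ (by positivity)).2 fun t => ?_
          simp)
    have : Φ = fun x => L x + Φ 0 := by
      ext x t <;> simp [Φ, L, sub_eq_add_neg]
    rw [this]
    exact (L.analyticAt a).add analyticAt_const
  have hΦa : Φ a ∈ Metric.eball 0 R := by
    rw [Metric.mem_eball, edist_zero_right]
    refine lt_of_le_of_lt ?_ hrR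
    rw [← enorm_norm, ← ofReal_norm, ← ENNReal.ofReal_coe_nnreal]
    apply ENNReal.ofReal_le_ofReal
    rw [norm_norm]
    refine (ContinuousMap.norm_le _ hr0'.le).2 fun t => ?_
    simpa [Φ, Prod.norm_def] using (hball t (hsub t.2)).le
  have hcomp : AnalyticAt ℂ (fun x => Λ (Q (Φ x))) a :=
    (Λ.analyticAt _).comp ((hQA _ hΦa).comp hΦA)
  refine hcomp.congr ?_
  filter_upwards [hΦA.continuousAt.eventually_mem (Metric.isOpen_eball.mem_nhds hΦa)] with x hx
  change ∫ t in c..d, IccExtend hcd (Q (Φ x)) t = _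
  refine intervalIntegral.integral_congr fun t ht => ?_
  rw [uIcc_of_le hcd] at ht
  rw [IccExtend_of_mem hcd _ ht, hQ _ hx]
  simp [Φ]

lemma integral_analytic {E : Type*} [NormedAddCommGroup E] [NormedSpace ℂ E]
    (H : ℂ × E → ℂ) (γ : ℝ → ℂ) (hγ : Continuous γ) (a : E) {b c : ℝ} (hbc : b ≤ c)
    (hH : ∀ t ∈ Icc b c, AnalyticAt ℂ H (γ t, a)) :
    AnalyticAt ℂ (fun x => ∫ t in b..c, H (γ t, x)) a := by
  choose! δ hδ hloc using fun t (ht : t ∈ Icc b c) => local_analytic H γ hγ a t (hH t ht)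
  obtain ⟨t, ht0, htm, ⟨m, hm⟩, hcov⟩ := exists_monotone_Icc_subset_open_cover_Icc hbc
    (c := fun i : Icc b c => Metric.ball i (δ i)) (fun i => Metric.isOpen_ball)
    (fun i _ => mem_iUnion.2 ⟨i, Metric.mem_ball_self (hδ _ i.2)⟩)
  have hpiece : ∀ n, AnalyticAt ℂ (fun x => ∫ s in (t n : ℝ)..(t (n+1) : ℝ), H (γ s, x)) a := by
    intro n
    obtain ⟨i, hi⟩ := hcov n
    refine hloc i i.2 _ _ (htm n.le_succ) fun s hs => ?_
    exact hi (show (⟨s, (t n).2.1.trans hs.1, hs.2.trans (t (n+1)).2.2⟩ : Icc b c) ∈ _ from hs)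
  have hint : ∀ᶠ x in nhds a, ContinuousOn (fun s => H (γ s, x)) (Icc b c) := by
    have hev : ∀ᶠ x in nhds a, ∀ s ∈ Icc b c, ContinuousAt H (γ s, x) := by
      apply isCompact_Icc.eventually_forall_of_forall_eventually
      intro s hs
      have h1 : ∀ᶠ y in nhds (γ s, a), ContinuousAt H y :=
        (hH s hs).eventually_analyticAt.mono fun y hy => hy.continuousAt
      have h2 : ContinuousAt (fun z : E × ℝ => (γ z.2, z.1)) (a, s) := by fun_prop
      exact h2.eventually h1
    filter_upwards [hev] with x hx s hs
    have h2 : ContinuousAt (fun s : ℝ => (γ s, x)) s := by fun_prop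
    exact (ContinuousAt.comp (f := fun s : ℝ => (γ s, x)) (hx s hs) h2).continuousWithinAt
  have hsum : AnalyticAt ℂ
      (fun x => ∑ n ∈ Finset.range m, ∫ s in (t n : ℝ)..(t (n+1) : ℝ), H (γ s, x)) a :=
    Finset.analyticAt_fun_sum _ fun n _ => hpiece n
  refine hsum.congr ?_
  filter_upwards [hint] with x hx
  rw [intervalIntegral.sum_integral_adjacent_intervals (a := fun n => (t n : ℝ)), ht0, hm m le_rfl]
  intro n _
  apply ContinuousOn.intervalIntegrable
  apply hx.mono
  rw [uIcc_of_le (show (t n : ℝ) ≤ t (n+1) from htm n.le_succ)]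
  exact Icc_subset_Icc (t n).2.1 (t (n+1)).2.2

/-- partial fractions -/
lemma partial_frac (k : ℕ) (hk : 0 < k) {ζ : ℂ} (hζ : IsPrimitiveRoot ζ k) (v w : ℂ)
    (hw : w ^ k - v ^ k ≠ 0) :
    (k : ℂ) * w ^ (k-1) / (w ^ k - v ^ k) = ∑ j ∈ Finset.range k, (w - ζ ^ j * v)⁻¹ := by
  have h := X_pow_sub_C_eq_prod hζ hk (rfl : v ^ k = v ^ k)
  have he := congrArg (Polynomial.eval w) h
  have hd := congrArg (fun q => Polynomial.eval w (Polynomial.derivative q)) h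
  simp only [Polynomial.eval_sub, Polynomial.eval_pow, Polynomial.eval_X, Polynomial.eval_C,
    Polynomial.eval_prod] at he
  simp only [Polynomial.derivative_sub, Polynomial.derivative_C, Polynomial.derivative_X_pow,
    Polynomial.derivative_prod_finset, Polynomial.eval_finsetSum, Polynomial.eval_prod,
    Polynomial.eval_sub, Polynomial.eval_mul, Polynomial.eval_pow, Polynomial.eval_X,
    Polynomial.eval_C, Polynomial.derivative_X, sub_zero, mul_one, Polynomial.eval_one] at hd
  have hne : ∀ j ∈ Finset.range k, w - ζ ^ j * v ≠ 0 := by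
    rw [he] at hw
    exact Finset.prod_ne_zero_iff.1 hw
  rw [hd, Finset.sum_div]
  refine Finset.sum_congr rfl fun j hj => ?_
  rw [he, ← Finset.mul_prod_erase _ _ hj]
  have h1 := hne j hj
  have h2 : ∏ i ∈ (Finset.range k).erase j, (w - ζ ^ i * v) ≠ 0 :=
    Finset.prod_ne_zero_iff.2 fun i hi => hne i (Finset.mem_of_mem_erase hi)
  rw [div_mul_cancel_right₀ h2]

/-- averaging = Cauchy integral -/
lemma avg_eq (k : ℕ) (hk : 0 < k) {ζ : ℂ} (hζ : IsPrimitiveRoot ζ k) (v : ℂ) (s : ℝ)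
    (hv : ‖v‖ < s) (h : ℂ → ℂ) (hd : DifferentiableOn ℂ h (Metric.closedBall 0 s)) :
    (∑ j ∈ Finset.range k, h (ζ ^ j * v)) =
      (2 * Real.pi * I : ℂ)⁻¹ * ∮ w in C(0, s), (k : ℂ) * w ^ (k-1) / (w ^ k - v ^ k) * h w := by
  have hs : 0 < s := (norm_nonneg v).trans_lt hv
  have hz : ∀ j, ‖ζ ^ j * v‖ < s := fun j => by
    rw [norm_mul, norm_pow, hζ.norm'_eq_one hk.ne']; simpa
  have h1 : (∮ w in C(0, s), (k : ℂ) * w ^ (k-1) / (w ^ k - v ^ k) * h w) =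
      ∮ w in C(0, s), ∑ j ∈ Finset.range k, (w - ζ ^ j * v)⁻¹ * h w := by
    refine circleIntegral.integral_congr hs.le fun w hw => ?_
    have hw' : ‖w‖ = s := by simpa using hw
    rw [partial_frac k hk hζ, Finset.sum_mul]
    intro h0
    have := congrArg norm (sub_eq_zero.1 h0)
    rw [norm_pow, norm_pow, hw'] at this
    exact (pow_lt_pow_left₀ hv (norm_nonneg _) hk.ne').ne' this
  rw [h1, circleIntegral.integral_fun_sum]
  · rw [Finset.mul_sum]
    refine Finset.sum_congr rfl fun j _ => ?_
    have := hd.circleIntegral_sub_inv_smul (w := ζ ^ j * v) (by simpa using hz j)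
    simp only [smul_eq_mul] at this
    rw [this, inv_mul_cancel_left₀]
    simp [Real.pi_ne_zero]
  · intro j _
    refine ContinuousOn.circleIntegrable hs.le ?_
    refine ContinuousOn.mul ?_ (hd.continuousOn.mono Metric.sphere_subset_closedBall)
    refine ContinuousOn.inv₀ (by fun_prop) fun w hw h0 => ?_
    have hw' : ‖w‖ = s := by simpa using hw
    rw [sub_eq_zero.1 h0] at hw'
    exact (hz j).ne hw'

lemma analytic_update (d : ℕ) (z : ℂ × (Fin (d+1) → ℂ)) :
    AnalyticAt ℂ (fun z : ℂ × (Fin (d+1) → ℂ) => Function.update z.2 0 z.1) z := by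
  rw [analyticAt_pi_iff]
  intro i
  by_cases hi : i = 0
  · subst hi; simpa using analyticAt_fst
  · simp only [Function.update_of_ne hi]
    exact ((ContinuousLinearMap.proj (R := ℂ) (φ := fun _ : Fin (d+1) => ℂ) i).analyticAt _).comp
      analyticAt_snd

lemma update_mem_polydisk {d : ℕ} {r : ℝ} {x : Fin (d+1) → ℂ} {w : ℂ}
    (hx : ∀ j, j ≠ 0 → ‖x j‖ < r) (hw : ‖w‖ < r) :
    Function.update x 0 w ∈ polydisk (d+1) r := by
  intro j
  by_cases hj : j = 0
  · subst hj; simpa using hw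
  · simpa [hj] using hx j hj

lemma ramification_update {d k : ℕ} {x : Fin (d+1) → ℂ} {w : ℂ} (hw : w ^ k = x 0) :
    ramification d k (Function.update x 0 w) = x := by
  ext j
  by_cases hj : j = 0
  · subst hj; simpa [ramification] using hw
  · simp [ramification, hj]

lemma avg_analytic {d k : ℕ} (hk : 0 < k) {ζ : ℂ} (hζ : IsPrimitiveRoot ζ k) {r' : ℝ}
    {g : (Fin (d+1) → ℂ) → ℂ} (hg : AnalyticOnNhd ℂ g (polydisk (d+1) r'))
    (q : ℂ → ℂ) (hq : ∀ z, q z ^ k = z) (a : Fin (d+1) → ℂ)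
    (ha : ∀ j, j ≠ 0 → ‖a j‖ < r') (ha0 : ‖q (a 0)‖ < r') :
    AnalyticAt ℂ (fun x : Fin (d+1) → ℂ =>
      ∑ j ∈ Finset.range k, g (Function.update x 0 (ζ ^ j * q (x 0)))) a := by
  obtain ⟨s, hs1, hs2⟩ := exists_between ha0
  have hs : 0 < s := (norm_nonneg _).trans_lt hs1
  have hlt : ‖a 0‖ < s ^ k := by
    rw [← hq (a 0), norm_pow]; exact pow_lt_pow_left₀ hs1 (norm_nonneg _) hk.ne'
  let H : ℂ × (Fin (d+1) → ℂ) → ℂ := fun z =>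
    z.1 * I * ((k : ℂ) * z.1 ^ (k-1) / (z.1 ^ k - z.2 0) * g (Function.update z.2 0 z.1))
  have hproj : ∀ (i : Fin (d+1)) (z : ℂ × (Fin (d+1) → ℂ)),
      AnalyticAt ℂ (fun z : ℂ × (Fin (d+1) → ℂ) => z.2 i) z := fun i z =>
    ((ContinuousLinearMap.proj (R := ℂ) (φ := fun _ : Fin (d+1) => ℂ) i).analyticAt _).comp
      analyticAt_snd
  have hHA : ∀ t ∈ Icc 0 (2 * Real.pi), AnalyticAt ℂ H (circleMap 0 s t, a) := by
    intro t _
    have hn : ‖circleMap 0 s t‖ = s := by simp [abs_of_pos hs]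
    refine (analyticAt_fst.mul analyticAt_const).mul (AnalyticAt.mul (AnalyticAt.div ?_ ?_ ?_) ?_)
    · exact analyticAt_const.mul (analyticAt_fst.pow _)
    · exact (analyticAt_fst.pow _).sub (hproj 0 _)
    · intro h0
      have := congrArg norm (sub_eq_zero.1 h0)
      simp only [norm_pow, hn] at this
      exact hlt.ne' this
    · exact AnalyticAt.comp (g := g) (hg _ (update_mem_polydisk ha (hn.trans_lt hs2)))
        (analytic_update d _)
  have hI := integral_analytic H (circleMap 0 s) (continuous_circleMap 0 s) a
    Real.two_pi_pos.le hHA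
  refine ((analyticAt_const (v := (2 * Real.pi * I : ℂ)⁻¹)).mul hI).congr ?_
  have hev0 : ∀ᶠ x in nhds a, ‖x 0‖ < s ^ k := by
    have : ContinuousAt (fun x : Fin (d+1) → ℂ => ‖x 0‖) a := (continuous_apply (0 : Fin (d+1))).norm.continuousAt
    exact this.eventually_lt_const hlt
  have hev : ∀ᶠ x in nhds a, ∀ j, j ≠ 0 → ‖x j‖ < r' := by
    rw [Filter.eventually_all]
    intro j
    by_cases hj : j = 0
    · simp [hj]
    · have : ContinuousAt (fun x : Fin (d+1) → ℂ => ‖x j‖) a := (continuous_apply j).norm.continuousAt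
      filter_upwards [this.eventually_lt_const (ha j hj)] with x hx _ using hx
  filter_upwards [hev0, hev] with x hx0 hx
  have hv : ‖q (x 0)‖ < s := by
    rw [← hq (x 0), norm_pow] at hx0
    exact lt_of_pow_lt_pow_left₀ k hs.le hx0
  simp only [Pi.mul_apply]
  rw [avg_eq k hk hζ (q (x 0)) s hv (fun w => g (Function.update x 0 w)), circleIntegral]
  · simp [H, hq, deriv_circleMap]
  · intro w hw
    have hw' : ‖w‖ < r' := lt_of_le_of_lt (by simpa using hw) hs2
    have h1 := (hg _ (update_mem_polydisk hx hw'))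
    have h2 : DifferentiableAt ℂ (fun w : ℂ => Function.update x 0 w) w :=
      ((analytic_update d (w, x)).differentiableAt).comp w
        (f := fun w : ℂ => (w, x)) (by fun_prop)
    exact (DifferentiableAt.comp (f := fun w : ℂ => Function.update x 0 w) w
      h1.differentiableAt h2).differentiableWithinAt

/-- **Stability of `P`-asymptotic expansions under ramification** (Proposition 6.11).
If `f ∘ r_k` admits a `(P∘r_k)`-asymptotic expansion in the estimate sense with constants
`C_n`, then `f` admits a `P`-asymptotic expansion in the estimate sense with the same
constants `C_n`. -/
theorem P_asymptotics_stable_under_ramification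
    (d : ℕ) (k : ℕ) (hk : 2 ≤ k) (ρ₀ : ℝ) (hρ₀ : 0 < ρ₀)
    (P : (Fin (d + 1) → ℂ) → ℂ) (hP : AnalyticOnNhd ℂ P (polydisk (d + 1) ρ₀))
    (hP0 : P 0 = 0) (hPne : ∃ x ∈ polydisk (d + 1) ρ₀, P x ≠ 0)
    (α β : ℝ) (hαβ : α < β) (h2π : β ≤ α + 2 * Real.pi)
    (f : (Fin (d + 1) → ℂ) → ℂ)
    (hf : AnalyticOnNhd ℂ f (PSector (d + 1) P α β ρ₀))
    (r' : ℝ) (hr' : 0 < r')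
    (himg : ∀ v ∈ polydisk (d + 1) r', ramification d k v ∈ polydisk (d + 1) ρ₀)
    (g : ℕ → (Fin (d + 1) → ℂ) → ℂ) (C : ℕ → ℝ)
    (hgA : ∀ n, AnalyticOnNhd ℂ (g n) (polydisk (d + 1) r'))
    (hgB : ∀ n, ∃ M, ∀ v ∈ polydisk (d + 1) r', ‖g n v‖ ≤ M)
    (hCpos : ∀ n, 0 < C n)
    (hest : ∀ n, ∀ v ∈ PSector (d + 1) (fun w => P (ramification d k w)) α β r',
      ‖f (ramification d k v) - g n v‖ ≤
        C n * ‖P (ramification d k v)‖ ^ n) :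
    ∃ ρ > 0, ρ ≤ ρ₀ ∧
      ∃ fn : ℕ → (Fin (d + 1) → ℂ) → ℂ,
        (∀ n, AnalyticOnNhd ℂ (fn n) (polydisk (d + 1) ρ)) ∧
        (∀ n, ∃ M, ∀ x ∈ polydisk (d + 1) ρ, ‖fn n x‖ ≤ M) ∧
        (∀ n, ∀ x ∈ PSector (d + 1) P α β ρ,
          ‖f x - fn n x‖ ≤ C n * ‖P x‖ ^ n) := by
  have hk0 : 0 < k := by omega
  have hkC : (k : ℂ) ≠ 0 := by exact_mod_cast hk0.ne'
  have hζ := Complex.isPrimitiveRoot_exp k hk0.ne'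
  set ζ := Complex.exp (2 * Real.pi * I / k) with hζdef
  obtain ⟨q, hq⟩ : ∃ q : ℂ → ℂ, ∀ z, q z ^ k = z :=
    ⟨fun z => z ^ ((k : ℂ)⁻¹), fun z => Complex.cpow_nat_inv_pow z hk0.ne'⟩
  have hζn : ∀ j : ℕ, ‖ζ ^ j‖ = 1 := fun j => by
    rw [norm_pow, hζ.norm'_eq_one hk0.ne', one_pow]
  have hζk : ∀ (j : ℕ) z, (ζ ^ j * q z) ^ k = z := fun j z => by
    rw [mul_pow, hq, ← pow_mul, mul_comm j k, pow_mul, hζ.pow_eq_one, one_pow, one_mul]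
  have havg : ∀ (M : ℝ) (F : ℕ → ℂ), (∀ j, ‖F j‖ ≤ M) →
      ‖(k : ℂ)⁻¹ * ∑ j ∈ Finset.range k, F j‖ ≤ M := by
    intro M F hF
    have h1 : ‖∑ j ∈ Finset.range k, F j‖ ≤ k * M := by
      refine (norm_sum_le_of_le _ fun j _ => hF j).trans ?_
      simp
    rw [norm_mul, norm_inv, Complex.norm_natCast]
    have : (0:ℝ) < k := by exact_mod_cast hk0
    rw [inv_mul_le_iff₀ this]
    exact h1
  have hroot : ∀ z : ℂ, ‖z‖ < r' ^ k → ‖q z‖ < r' := fun z hz => by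
    rw [← hq z, norm_pow] at hz
    exact lt_of_pow_lt_pow_left₀ k hr'.le hz
  refine ⟨min ρ₀ (min r' (r' ^ k)), lt_min hρ₀ (lt_min hr' (pow_pos hr' k)), min_le_left _ _,
    fun n x => (k : ℂ)⁻¹ * ∑ j ∈ Finset.range k,
      g n (Function.update x 0 (ζ ^ j * q (x 0))), ?_, ?_, ?_⟩
  · intro n a ha
    have h1 : ∀ j, ‖a j‖ < r' := fun j =>
      (ha j).trans_le ((min_le_right _ _).trans (min_le_left _ _))
    have h2 : ‖q (a 0)‖ < r' :=
      hroot _ ((ha 0).trans_le ((min_le_right _ _).trans (min_le_right _ _)))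
    exact analyticAt_const.mul (avg_analytic hk0 hζ (hgA n) q hq a (fun j _ => h1 j) h2)
  · intro n
    obtain ⟨M, hM⟩ := hgB n
    refine ⟨M, fun a ha => havg M _ fun j => hM _ ?_⟩
    refine update_mem_polydisk
      (fun j _ => (ha j).trans_le ((min_le_right _ _).trans (min_le_left _ _))) ?_
    rw [norm_mul, hζn, one_mul]
    exact hroot _ ((ha 0).trans_le ((min_le_right _ _).trans (min_le_right _ _)))
  · intro n x hx
    obtain ⟨hxn, hPx, hθ⟩ := hx
    have hram : ∀ j : ℕ, ramification d k (Function.update x 0 (ζ ^ j * q (x 0))) = x :=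
      fun j => ramification_update (hζk j _)
    have hx0 : 0 < ‖q (x 0)‖ := by
      rw [norm_pos_iff]
      intro h0
      have h := hq (x 0)
      rw [h0, zero_pow hk0.ne'] at h
      have h' := (hxn 0).1
      rw [← h] at h'
      simp at h'
    have hmem : ∀ j : ℕ, Function.update x 0 (ζ ^ j * q (x 0)) ∈
        PSector (d + 1) (fun w => P (ramification d k w)) α β r' := by
      intro j
      refine ⟨fun i => ?_, ?_, ?_⟩
      · by_cases hi : i = 0
        · subst hi
          rw [Function.update_self, norm_mul, hζn, one_mul]
          exact ⟨hx0, hroot _ ((hxn 0).2.trans_le ((min_le_right _ _).trans (min_le_right _ _)))⟩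
        · rw [Function.update_of_ne hi]
          exact ⟨(hxn i).1, (hxn i).2.trans_le ((min_le_right _ _).trans (min_le_left _ _))⟩
      · simpa only [hram] using hPx
      · simpa only [hram] using hθ
    have hsum : f x - (k : ℂ)⁻¹ * ∑ j ∈ Finset.range k,
        g n (Function.update x 0 (ζ ^ j * q (x 0))) =
        (k : ℂ)⁻¹ * ∑ j ∈ Finset.range k,
          (f x - g n (Function.update x 0 (ζ ^ j * q (x 0)))) := by
      rw [Finset.sum_sub_distrib, mul_sub]
      simp [hkC]
    rw [hsum]
    refine havg _ _ fun j => ?_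
    have := hest n _ (hmem j)
    rwa [hram] at this
end
end
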